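/- arXiv:1403.4685 — 4 statements merged into one kernel-verified Lean document; each statement's English description precedes it below -/
import Mathlib

section
/- Let p be a prime, F a field of characteristic p, n a positive integer, and r, s integers with 1 ≤ r ≤ p^n − 1 and 1 ≤ s ≤ p^n. Set b = min(r,s), and suppose the Kronecker product J_r ⊗ J_s is similar over F to the block-diagonal matrix with diagonal blocks J_{λ_1},…,J_{λ_b}, where λ_1 ≥ ⋯ ≥ λ_b > 0. Then λ_i ≤ p^n for all i, and J_{p^n−r} ⊗ J_s is similar over F to the block-diagonal matrix consisting of s − b blocks equal to J_{p^n} together with one block J_{p^n−λ_i} for each index i with λ_i < p^n. -/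
/-!
Write `q = pⁿ` and regard a square matrix `A` as the space with operator `A - 1`; when
`(A - 1)^q = 0` this is a module over the local ring `R = F[X]/(X^q)`, and `J_q` is free of
rank one. In characteristic `p`, Jordan blocks of size at most `q` satisfy `J^q = 1`, hence so do
their Kronecker products; this gives `λᵢ ≤ q`.

The short exact sequence `0 → J_{q-r} → J_q → J_r → 0` tensored with `J_s` presents
`J_{q-r} ⊗ J_s` as the kernel of a surjection `J_q ⊗ J_s → J_r ⊗ J_s ≅ ⨁ J_{λᵢ}`
(`exists_exact_kronecker`). The block-diagonal matrix of the conclusion is the kernel of a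
surjection from `⨁ J_q` (`s` summands) onto the same `⨁ J_{λᵢ}`
(`exists_exact_jordanBlockDiag`). Both sources have dimension `q s` and are generated by `s`
elements over `R` (`jordanBlockDiag_generate`, `kronecker_generate`), and the second one is free
(`jordanBlockDiag_lift`). A form of Schanuel's lemma over the local ring `R`,
`exists_equiv_of_free`, gives an isomorphism of the sources over `⨁ J_{λᵢ}`: an isomorphism
modulo `X` is found by linear algebra, lifted by freeness, and is bijective by Nakayama's lemma
and a dimension count. It restricts to the kernels (`exists_equiv_of_ker`).
-/

open Kronecker

/-- The `m × m` Jordan block with eigenvalue `1`: ones on the main diagonal and the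
superdiagonal, zeros elsewhere. -/
def jordanBlock (F : Type*) [Zero F] [One F] (m : ℕ) : Matrix (Fin m) (Fin m) F :=
  Matrix.of fun i j => if (j : ℕ) = (i : ℕ) ∨ (j : ℕ) = (i : ℕ) + 1 then 1 else 0

/-- The block-diagonal matrix whose diagonal blocks are the Jordan blocks `J_{d i}`, `i : ι`. -/
def jordanBlockDiag (F : Type*) [Field F] {ι : Type} [DecidableEq ι] (d : ι → ℕ) :
    Matrix ((i : ι) × Fin (d i)) ((i : ι) × Fin (d i)) F :=
  Matrix.blockDiagonal' fun i => jordanBlock F (d i)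

/-- Similarity of square matrices, possibly indexed by different (finite) types:
both matrices represent the same linear endomorphism up to a linear change of basis. -/
def MatSimilar (F : Type*) [Field F] {n m : Type*} [Fintype n] [Fintype m]
    (A : Matrix n n F) (B : Matrix m m F) : Prop :=
  ∃ e : (n → F) ≃ₗ[F] (m → F), ∀ v, e (A.mulVec v) = B.mulVec (e v)

/-! ### Linear algebra with a nilpotent operator -/

/-- Two surjections onto the same space from spaces of equal finite dimension differ by an
isomorphism of their sources. -/
lemma exists_equiv_of_surjective {F V V' Q : Type*} [Field F]
    [AddCommGroup V] [Module F V] [FiniteDimensional F V]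
    [AddCommGroup V'] [Module F V'] [FiniteDimensional F V'] [AddCommGroup Q] [Module F Q]
    (hdim : Module.finrank F V = Module.finrank F V')
    (u : V →ₗ[F] Q) (u' : V' →ₗ[F] Q)
    (hu : Function.Surjective u) (hu' : Function.Surjective u') :
    ∃ g : V ≃ₗ[F] V', ∀ x, u' (g x) = u x := by
  obtain ⟨σ, hσ⟩ := u.exists_rightInverse_of_surjective (LinearMap.range_eq_top.2 hu)
  obtain ⟨σ', hσ'⟩ := u'.exists_rightInverse_of_surjective (LinearMap.range_eq_top.2 hu')
  have hσ1 : ∀ y, u (σ y) = y := fun y => LinearMap.congr_fun hσ y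
  have hσ1' : ∀ y, u' (σ' y) = y := fun y => LinearMap.congr_fun hσ' y
  have hk : Module.finrank F u.ker = Module.finrank F u'.ker := by
    have h1 := u.finrank_range_add_finrank_ker
    have h2 := u'.finrank_range_add_finrank_ker
    rw [LinearMap.range_eq_top.2 hu] at h1
    rw [LinearMap.range_eq_top.2 hu'] at h2
    omega
  let k : u.ker ≃ₗ[F] u'.ker := LinearEquiv.ofFinrankEq _ _ hk
  -- `x = (x - σ (u x)) + σ (u x)`; the kernel part is moved by `k`, the section part by `σ'`.
  let pr : V →ₗ[F] u.ker := LinearMap.codRestrict u.ker (LinearMap.id - σ ∘ₗ u) (by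
    intro x; simp [hσ1])
  let g : V →ₗ[F] V' := u'.ker.subtype ∘ₗ k.toLinearMap ∘ₗ pr + σ' ∘ₗ u
  have hg : ∀ x, u' (g x) = u x := by
    intro x
    have : u' (k (pr x) : V') = 0 := (k (pr x)).2
    simp [g, hσ1', this]
  have hinj : Function.Injective g := by
    rw [← LinearMap.ker_eq_bot, LinearMap.ker_eq_bot']
    intro x hx
    have h1 : u x = 0 := by rw [← hg, hx, map_zero]
    have h2 : (k (pr x) : V') = 0 := by simpa [g, h1] using hx
    have h3 : pr x = 0 := by
      apply k.injective; rw [map_zero]; exact Subtype.ext h2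
    have h4 : x - σ (u x) = 0 := congrArg Subtype.val h3
    simpa [h1] using h4
  have hbij : Function.Bijective g :=
    ⟨hinj, (LinearMap.injective_iff_surjective_of_finrank_eq_finrank hdim).1 hinj⟩
  exact ⟨LinearEquiv.ofBijective g hbij, hg⟩

/-- Nakayama's lemma for a nilpotent operator. -/
lemma eq_top_of_sup_range_eq_top {F V : Type*} [Field F] [AddCommGroup V] [Module F V]
    (N : Module.End F V) (q : ℕ) (hN : N ^ q = 0) (U : Submodule F V)
    (hU : ∀ x ∈ U, N x ∈ U) (h : U ⊔ LinearMap.range N = ⊤) : U = ⊤ := by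
  have key : ∀ k x, ∃ y ∈ U, ∃ z, x = y + (N ^ k) z := by
    intro k
    induction k with
    | zero => intro x; exact ⟨0, U.zero_mem, x, by simp⟩
    | succ k ih =>
      intro x
      have hx : x ∈ U ⊔ LinearMap.range N := h ▸ Submodule.mem_top
      obtain ⟨y, hy, _, ⟨z, rfl⟩, rfl⟩ := Submodule.mem_sup.1 hx
      obtain ⟨y', hy', z', rfl⟩ := ih z
      refine ⟨y + N y', U.add_mem hy (hU _ hy'), z', ?_⟩
      rw [map_add, add_assoc, pow_succ', Module.End.mul_apply]
  rw [eq_top_iff]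
  intro x _
  obtain ⟨y, hy, z, rfl⟩ := key q x
  simpa [hN] using hy

/-- If `P` is spanned by `e` modulo the image of its operator, then so is every equivariant
quotient `M` of `P`, by the images of `e`. -/
lemma surjective_mkQ_comp {F P M ι : Type*} [Field F] [Fintype ι]
    [AddCommGroup P] [Module F P] [AddCommGroup M] [Module F M]
    (N : Module.End F M) (N' : Module.End F P) (φ : P →ₗ[F] M)
    (hc : ∀ x, φ (N' x) = N (φ x)) (hs : Function.Surjective φ) (e : ι → P)
    (hg : Submodule.span F (Set.range e) ⊔ LinearMap.range N' = ⊤) :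
    Function.Surjective ((LinearMap.range N).mkQ ∘ₗ φ ∘ₗ Fintype.linearCombination F e) := by
  intro y
  obtain ⟨m, rfl⟩ := (LinearMap.range N).mkQ_surjective y
  obtain ⟨x, rfl⟩ := hs m
  have hx : x ∈ Submodule.span F (Set.range e) ⊔ LinearMap.range N' := hg ▸ Submodule.mem_top
  rw [← Fintype.range_linearCombination] at hx
  obtain ⟨_, ⟨c, rfl⟩, _, ⟨z, rfl⟩, rfl⟩ := Submodule.mem_sup.1 hx
  refine ⟨c, ?_⟩
  have h0 : (LinearMap.range N).mkQ (N (φ z)) = 0 := by simp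
  simp only [LinearMap.comp_apply, map_add, hc, h0, add_zero]

/-- Uniqueness of presentations with a given number of generators. Let `P₁`, `P₂` carry nilpotent operators and
be generated by families `e₁`, `e₂` of equal cardinality, with the freeness property `hlift`
for `P₁`. Then surjections from `P₁` and `P₂` onto the same `M` differ by an isomorphism
`P₁ ≃ P₂` of spaces with operator. -/
lemma exists_equiv_of_free {F P₁ P₂ M ι₁ ι₂ : Type*} [Field F] [Fintype ι₁] [Fintype ι₂]
    [AddCommGroup P₁] [Module F P₁] [FiniteDimensional F P₁]
    [AddCommGroup P₂] [Module F P₂] [FiniteDimensional F P₂]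
    [AddCommGroup M] [Module F M] (q : ℕ)
    (N₁ : Module.End F P₁) (N₂ : Module.End F P₂) (N : Module.End F M)
    (hN₁ : N₁ ^ q = 0) (hN₂ : N₂ ^ q = 0)
    (φ₁ : P₁ →ₗ[F] M) (φ₂ : P₂ →ₗ[F] M)
    (hc₁ : ∀ x, φ₁ (N₁ x) = N (φ₁ x)) (hc₂ : ∀ x, φ₂ (N₂ x) = N (φ₂ x))
    (hs₁ : Function.Surjective φ₁) (hs₂ : Function.Surjective φ₂)
    (e₁ : ι₁ → P₁) (e₂ : ι₂ → P₂)
    (hcard : Fintype.card ι₁ = Fintype.card ι₂)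
    (hdim : Module.finrank F P₁ = Module.finrank F P₂)
    (hg₁ : Submodule.span F (Set.range e₁) ⊔ LinearMap.range N₁ = ⊤)
    (hg₂ : Submodule.span F (Set.range e₂) ⊔ LinearMap.range N₂ = ⊤)
    (hlift : ∀ v : ι₁ → P₂, ∃ α : P₁ →ₗ[F] P₂,
      (∀ x, α (N₁ x) = N₂ (α x)) ∧ ∀ i, α (e₁ i) = v i) :
    ∃ θ : P₁ ≃ₗ[F] P₂, (∀ x, θ (N₁ x) = N₂ (θ x)) ∧ ∀ x, φ₂ (θ x) = φ₁ x := by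
  classical
  obtain ⟨g, hg⟩ := exists_equiv_of_surjective (F := F) (V := ι₁ → F) (V' := ι₂ → F)
    (by simp [hcard]) _ _
    (surjective_mkQ_comp N N₁ φ₁ hc₁ hs₁ e₁ hg₁)
    (surjective_mkQ_comp N N₂ φ₂ hc₂ hs₂ e₂ hg₂)
  -- `g` is the isomorphism modulo the operators; it is corrected to be compatible with `φ₁`, `φ₂`.
  have hv : ∀ i, ∃ y, φ₂ (Fintype.linearCombination F e₂ (g (Pi.single i 1)) + N₂ y)
      = φ₁ (e₁ i) := by
    intro i
    have h1 := hg (Pi.single i 1)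
    simp only [LinearMap.comp_apply] at h1
    rw [Fintype.linearCombination_apply_single, one_smul, ← sub_eq_zero, ← map_sub,
      Submodule.mkQ_apply, Submodule.Quotient.mk_eq_zero] at h1
    obtain ⟨m, hm⟩ := h1
    obtain ⟨y, rfl⟩ := hs₂ m
    refine ⟨-y, ?_⟩
    rw [map_neg, map_add, map_neg, hc₂, hm]
    abel
  choose y hy using hv
  obtain ⟨α, hαN, hαe⟩ := hlift
    (fun i => Fintype.linearCombination F e₂ (g (Pi.single i 1)) + N₂ (y i))
  have hφ : ∀ x, φ₂ (α x) = φ₁ x := by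
    have : LinearMap.eqLocus (φ₂ ∘ₗ α) φ₁ = ⊤ := by
      apply eq_top_of_sup_range_eq_top N₁ q hN₁
      · intro x hx
        simp only [LinearMap.mem_eqLocus, LinearMap.comp_apply] at hx ⊢
        rw [hαN, hc₂, hx, hc₁]
      · rw [eq_top_iff, ← hg₁]
        refine sup_le_sup_right (Submodule.span_le.2 ?_) _
        rintro _ ⟨i, rfl⟩
        simp [hαe, hy]
    intro x
    have hx : x ∈ LinearMap.eqLocus (φ₂ ∘ₗ α) φ₁ := this ▸ Submodule.mem_top
    exact hx
  have hαs : Function.Surjective α := by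
    rw [← LinearMap.range_eq_top]
    apply eq_top_of_sup_range_eq_top N₂ q hN₂
    · rintro _ ⟨x, rfl⟩
      exact ⟨N₁ x, hαN x⟩
    · have hall : ∀ c : ι₁ → F, Fintype.linearCombination F e₂ (g c) ∈
          LinearMap.range α ⊔ LinearMap.range N₂ := by
        intro c
        rw [pi_eq_sum_univ' c]
        simp only [map_sum, map_smul]
        refine Submodule.sum_mem _ fun i _ => Submodule.smul_mem _ _ ?_
        have : Fintype.linearCombination F e₂ (g (Pi.single i 1)) =
            α (e₁ i) + N₂ (-y i) := by rw [hαe]; simp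
        rw [this]
        exact Submodule.add_mem_sup ⟨_, rfl⟩ ⟨_, rfl⟩
      rw [eq_top_iff, ← hg₂, ← Fintype.range_linearCombination]
      refine sup_le ?_ le_sup_right
      rintro _ ⟨c, rfl⟩
      simpa using hall (g.symm c)
  have hbij : Function.Bijective α :=
    ⟨(LinearMap.injective_iff_surjective_of_finrank_eq_finrank hdim).2 hαs, hαs⟩
  exact ⟨LinearEquiv.ofBijective α hbij, hαN, hφ⟩

/-- An isomorphism over `M` of two spaces with operator restricts to the kernels of the maps
to `M`, here presented as images of injections `j₁`, `j₂`. -/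
lemma exists_equiv_of_ker {F A₁ A₂ P₁ P₂ M : Type*} [Field F]
    [AddCommGroup A₁] [Module F A₁] [AddCommGroup A₂] [Module F A₂]
    [AddCommGroup P₁] [Module F P₁] [AddCommGroup P₂] [Module F P₂]
    [AddCommGroup M] [Module F M]
    (S₁ : A₁ → A₁) (S₂ : A₂ → A₂) (T₁ : P₁ → P₁) (T₂ : P₂ → P₂)
    (φ₁ : P₁ →ₗ[F] M) (φ₂ : P₂ →ₗ[F] M) (θ : P₁ ≃ₗ[F] P₂)
    (hθ : ∀ x, θ (T₁ x) = T₂ (θ x)) (hφ : ∀ x, φ₂ (θ x) = φ₁ x)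
    (j₁ : A₁ →ₗ[F] P₁) (j₂ : A₂ →ₗ[F] P₂)
    (hj₁ : Function.Injective j₁) (hj₂ : Function.Injective j₂)
    (hc₁ : ∀ x, j₁ (S₁ x) = T₁ (j₁ x)) (hc₂ : ∀ x, j₂ (S₂ x) = T₂ (j₂ x))
    (hr₁ : ∀ x, φ₁ x = 0 ↔ ∃ a, j₁ a = x) (hr₂ : ∀ x, φ₂ x = 0 ↔ ∃ a, j₂ a = x) :
    ∃ e : A₁ ≃ₗ[F] A₂, ∀ v, e (S₁ v) = S₂ (e v) := by
  have hm : LinearMap.range (θ.toLinearMap ∘ₗ j₁) = LinearMap.range j₂ := by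
    ext x
    constructor
    · rintro ⟨a, rfl⟩
      exact (hr₂ _).1 ((hφ _).trans ((hr₁ _).2 ⟨a, rfl⟩))
    · intro hx
      have h0 := (hr₂ x).2 hx
      obtain ⟨a, ha⟩ := (hr₁ (θ.symm x)).1 (by rw [← hφ, θ.apply_symm_apply, h0])
      exact ⟨a, by simp [ha]⟩
  let e : A₁ ≃ₗ[F] A₂ :=
    (LinearEquiv.ofInjective (θ.toLinearMap ∘ₗ j₁) (θ.injective.comp hj₁)).trans
      ((LinearEquiv.ofEq _ _ hm).trans (LinearEquiv.ofInjective j₂ hj₂).symm)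
  have he : ∀ v, j₂ (e v) = θ (j₁ v) := by
    intro v
    exact congrArg Subtype.val ((LinearEquiv.ofInjective j₂ hj₂).apply_symm_apply
      ((LinearEquiv.ofEq _ _ hm) (LinearEquiv.ofInjective (θ.toLinearMap ∘ₗ j₁)
        (θ.injective.comp hj₁) v)))
  refine ⟨e, fun v => hj₂ ?_⟩
  rw [he, hc₁, hθ, hc₂, he]

/-! ### Jordan blocks -/

open Matrix

lemma jordanBlock_mulVec {F : Type*} [Field F] (m : ℕ) (v : Fin m → F) (k : Fin m) :
    (jordanBlock F m *ᵥ v) k = v k + if h : (k : ℕ) + 1 < m then v ⟨k + 1, h⟩ else 0 := by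
  have h1 : ∀ j : Fin m, jordanBlock F m k j * v j =
      (if j = k then v j else 0) + (if (j : ℕ) = k + 1 then v j else 0) := by
    intro j
    simp only [jordanBlock, Matrix.of_apply, Fin.ext_iff]
    split_ifs <;> first | omega | simp
  simp only [Matrix.mulVec, dotProduct, h1, Finset.sum_add_distrib, Finset.sum_ite_eq',
    Finset.mem_univ, if_true]
  congr 1
  split_ifs with h
  · rw [Finset.sum_eq_single ⟨k + 1, h⟩]
    · simp
    · intro j _ hj
      rw [if_neg (fun h' => hj (Fin.ext h'))]
    · simp
  · apply Finset.sum_eq_zero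
    intro j _
    rw [if_neg]
    have := j.2
    omega

lemma kronecker_mulVec_apply {F m n : Type*} [Field F] [Fintype m] [Fintype n]
    (A : Matrix m m F) (B : Matrix n n F) (v : m × n → F) (k : m) (j : n) :
    ((A ⊗ₖ B) *ᵥ v) (k, j) = (A *ᵥ fun k' => (B *ᵥ fun j' => v (k', j')) j) k := by
  simp only [Matrix.mulVec, dotProduct, Fintype.sum_prod_type, Matrix.kroneckerMap_apply,
    Finset.mul_sum, mul_assoc]

lemma jordanBlockDiag_mulVec {F : Type*} [Field F] {ι : Type} [Fintype ι] [DecidableEq ι]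
    (d : ι → ℕ) (v : (i : ι) × Fin (d i) → F) (i : ι) (k : Fin (d i)) :
    (jordanBlockDiag F d *ᵥ v) ⟨i, k⟩ =
      v ⟨i, k⟩ + if h : (k : ℕ) + 1 < d i then v ⟨i, ⟨k + 1, h⟩⟩ else 0 := by
  rw [← jordanBlock_mulVec (d i) (fun k' => v ⟨i, k'⟩) k]
  simp only [jordanBlockDiag, Matrix.mulVec, dotProduct, Fintype.sum_sigma]
  rw [Finset.sum_eq_single i]
  · simp [Matrix.blockDiagonal'_apply_eq]
  · intro i' _ hi'
    apply Finset.sum_eq_zero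
    intro k' _
    rw [Matrix.blockDiagonal'_apply_ne _ _ _ (Ne.symm hi'), zero_mul]
  · simp

lemma jordanBlock_sub_one_pow_mulVec {F : Type*} [Field F] (m t : ℕ) (v : Fin m → F)
    (k : Fin m) : ((jordanBlock F m - 1) ^ t *ᵥ v) k =
      if h : (k : ℕ) + t < m then v ⟨k + t, h⟩ else 0 := by
  induction t generalizing v with
  | zero => simp
  | succ t ih =>
    rw [pow_succ, ← Matrix.mulVec_mulVec, ih]
    simp only [Matrix.sub_mulVec, Matrix.one_mulVec, Pi.sub_apply, jordanBlock_mulVec,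
      add_sub_cancel_left, ← add_assoc]
    split_ifs <;> first | rfl | omega

lemma jordanBlockDiag_sub_one_pow_mulVec {F : Type*} [Field F] {ι : Type} [Fintype ι]
    [DecidableEq ι] (d : ι → ℕ) (t : ℕ) (v : (i : ι) × Fin (d i) → F) (i : ι) (k : Fin (d i)) :
    ((jordanBlockDiag F d - 1) ^ t *ᵥ v) ⟨i, k⟩ =
      if h : (k : ℕ) + t < d i then v ⟨i, ⟨k + t, h⟩⟩ else 0 := by
  induction t generalizing v with
  | zero => simp
  | succ t ih =>
    rw [pow_succ, ← Matrix.mulVec_mulVec, ih]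
    simp only [Matrix.sub_mulVec, Matrix.one_mulVec, Pi.sub_apply, jordanBlockDiag_mulVec,
      add_sub_cancel_left, ← add_assoc]
    split_ifs <;> first | rfl | omega

lemma sub_one_pow_charP {F : Type*} [Field F] (p : ℕ) (hp : p.Prime) [CharP F p] (n : ℕ)
    {m : Type*} [Fintype m] [DecidableEq m] (A : Matrix m m F) :
    (A - 1) ^ p ^ n = A ^ p ^ n - 1 := by
  cases isEmpty_or_nonempty m
  · exact Subsingleton.elim _ _
  · have : Fact p.Prime := ⟨hp⟩
    rw [sub_pow_char_pow_of_commute p n (Commute.one_right A), one_pow]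

lemma jordanBlock_pow_charP {F : Type*} [Field F] (p : ℕ) (hp : p.Prime) [CharP F p] (n m : ℕ)
    (hm : m ≤ p ^ n) : jordanBlock F m ^ p ^ n = 1 := by
  rw [← sub_eq_zero, ← sub_one_pow_charP p hp, ← Matrix.mulVec_injective.eq_iff]
  ext v k
  rw [jordanBlock_sub_one_pow_mulVec, dif_neg (by omega)]
  simp

lemma kronecker_pow {F m n : Type*} [Field F] [Fintype m] [DecidableEq m] [Fintype n]
    [DecidableEq n] (A : Matrix m m F) (B : Matrix n n F) (k : ℕ) :
    (A ⊗ₖ B) ^ k = (A ^ k) ⊗ₖ (B ^ k) := by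
  induction k with
  | zero => simp
  | succ k ih => rw [pow_succ, pow_succ, pow_succ, Matrix.mul_kronecker_mul, ih]

lemma jordanBlock_kronecker_nilpotent {F : Type*} [Field F] (p : ℕ) (hp : p.Prime) [CharP F p]
    (n r s : ℕ) (hr : r ≤ p ^ n) (hs : s ≤ p ^ n) :
    (jordanBlock F r ⊗ₖ jordanBlock F s - 1) ^ p ^ n = 0 := by
  rw [sub_one_pow_charP p hp, kronecker_pow, jordanBlock_pow_charP p hp n r hr,
    jordanBlock_pow_charP p hp n s hs, Matrix.one_kronecker_one, sub_self]

/-- An intertwiner of `A` and `B` also intertwines all powers of `A - 1` and `B - 1`. -/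
lemma intertwine_sub_one_pow {F m n : Type*} [Field F] [Fintype m] [DecidableEq m] [Fintype n]
    [DecidableEq n] (A : Matrix m m F) (B : Matrix n n F) (f : (m → F) →ₗ[F] (n → F))
    (hf : ∀ v, f (A *ᵥ v) = B *ᵥ f v) (t : ℕ) (v : m → F) :
    f ((A - 1) ^ t *ᵥ v) = (B - 1) ^ t *ᵥ f v := by
  induction t generalizing v with
  | zero => simp
  | succ t ih =>
    rw [pow_succ, pow_succ, ← Matrix.mulVec_mulVec, ih, ← Matrix.mulVec_mulVec]
    simp only [Matrix.sub_mulVec, Matrix.one_mulVec, map_sub, hf]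

/-! ### The free module `J_q ⊕ ⋯ ⊕ J_q` -/

/-- The top basis vector `e_{q-1}` of each block freely generates `J_q ⊕ ⋯ ⊕ J_q` among the
spaces with an operator killed by its `q`-th power. -/
lemma jordanBlockDiag_lift {F : Type*} [Field F] {ι : Type} [Fintype ι] [DecidableEq ι]
    (q : ℕ) (hq : 0 < q) {V : Type*} [AddCommGroup V] [Module F V] (N : Module.End F V)
    (hN : N ^ q = 0) (v : ι → V) :
    ∃ α : ((_ : ι) × Fin q → F) →ₗ[F] V,
      (∀ x, α ((jordanBlockDiag F (fun _ : ι => q) - 1) *ᵥ x) = N (α x)) ∧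
      ∀ i, α (Pi.single ⟨i, ⟨q - 1, Nat.sub_one_lt hq.ne'⟩⟩ 1) = v i := by
  refine ⟨Fintype.linearCombination F
    (fun ik : (_ : ι) × Fin q => (N ^ (q - 1 - (ik.2 : ℕ))) (v ik.1)), ?_, ?_⟩
  · obtain ⟨q, rfl⟩ : ∃ q', q = q' + 1 := ⟨q - 1, by omega⟩
    intro x
    simp only [Fintype.linearCombination_apply, Fintype.sum_sigma, map_sum]
    refine Finset.sum_congr rfl fun i _ => ?_
    simp only [Matrix.sub_mulVec, Matrix.one_mulVec, Pi.sub_apply, jordanBlockDiag_mulVec,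
      add_sub_cancel_left]
    rw [Fin.sum_univ_castSucc, Fin.sum_univ_succ]
    have h0 : N ((N ^ q) (v i)) = 0 := by
      rw [← Module.End.mul_apply, ← pow_succ', hN, LinearMap.zero_apply]
    simp only [Fin.val_castSucc, Fin.val_last, Fin.val_zero, Fin.val_succ, lt_irrefl,
      dite_false, zero_smul, add_zero, map_smul, add_tsub_cancel_right, tsub_zero, h0,
      smul_zero, zero_add]
    refine Finset.sum_congr rfl fun k _ => ?_
    rw [dif_pos (by omega), ← Module.End.mul_apply, ← pow_succ',
      show q - (k + 1 : ℕ) + 1 = q - k by omega]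
    rfl
  · intro i
    simp [Fintype.linearCombination_apply_single]

lemma jordanBlockDiag_generate {F : Type*} [Field F] {ι : Type} [Fintype ι] [DecidableEq ι]
    (q : ℕ) (hq : 0 < q) :
    Submodule.span F (Set.range fun i : ι =>
        (Pi.single ⟨i, ⟨q - 1, Nat.sub_one_lt hq.ne'⟩⟩ 1 : (_ : ι) × Fin q → F)) ⊔
      LinearMap.range (jordanBlockDiag F (fun _ : ι => q) - 1).mulVecLin = ⊤ := by
  rw [eq_top_iff]
  intro f _
  rw [← Fintype.range_linearCombination]
  refine Submodule.mem_sup.2 ⟨_, ⟨fun i => f ⟨i, ⟨q - 1, Nat.sub_one_lt hq.ne'⟩⟩, rfl⟩, _,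
    ⟨fun ik => f ⟨ik.1, ⟨ik.2 - 1, by omega⟩⟩ - if (ik.2 : ℕ) = 0 then f ⟨ik.1, ik.2⟩ else 0,
      rfl⟩, ?_⟩
  ext ⟨i, k⟩
  simp only [Pi.add_apply, Matrix.mulVecLin_apply, Matrix.sub_mulVec, Matrix.one_mulVec,
    Pi.sub_apply, jordanBlockDiag_mulVec, add_sub_cancel_left, Fintype.linearCombination_apply,
    Finset.sum_apply, Pi.smul_apply, smul_eq_mul]
  rw [Finset.sum_eq_single i]
  · by_cases hk : (k : ℕ) + 1 < q
    · rw [Pi.single_eq_of_ne]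
      · simp [hk]
      · intro h
        simp only [Sigma.mk.injEq, heq_eq_eq, true_and, Fin.ext_iff] at h
        omega
    · obtain rfl : k = ⟨q - 1, Nat.sub_one_lt hq.ne'⟩ := Fin.ext (by simp; omega)
      rw [dif_neg hk]
      simp
  · intro i' _ hi'
    rw [Pi.single_eq_of_ne, mul_zero]
    intro h
    exact hi' (by simpa using (congrArg Sigma.fst h).symm)
  · simp

/-- Modulo the image of `J_q ⊗ B - 1`, the space `F^q ⊗ F^s` is spanned by the vectors
`e_{q-1} ⊗ e_j`: indeed `(J_q ⊗ B - 1)(e_{k+1} ⊗ w) = e_k ⊗ B w + e_{k+1} ⊗ (B w - w)`, so that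
the vectors `e_k ⊗ w` are reached by descending induction on `k`, as `B` is onto. -/
lemma kronecker_generate {F : Type*} [Field F] (q s : ℕ) (hq : 0 < q)
    (B : Matrix (Fin s) (Fin s) F) (hB : Function.Surjective B.mulVec) :
    Submodule.span F (Set.range fun j : Fin s =>
        (Pi.single (⟨q - 1, Nat.sub_one_lt hq.ne'⟩, j) 1 : Fin q × Fin s → F)) ⊔
      LinearMap.range (jordanBlock F q ⊗ₖ B - 1).mulVecLin = ⊤ := by
  set U := Submodule.span F (Set.range fun j : Fin s =>
        (Pi.single (⟨q - 1, Nat.sub_one_lt hq.ne'⟩, j) 1 : Fin q × Fin s → F)) ⊔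
      LinearMap.range (jordanBlock F q ⊗ₖ B - 1).mulVecLin with hU
  let X : Fin q → (Fin s → F) → (Fin q × Fin s → F) :=
    fun k w kj => if kj.1 = k then w kj.2 else 0
  have key : ∀ t (k : Fin q), (k : ℕ) + t = q - 1 → ∀ w, X k w ∈ U := by
    intro t
    induction t with
    | zero =>
      intro k hk w
      obtain rfl : k = ⟨q - 1, Nat.sub_one_lt hq.ne'⟩ := Fin.ext hk
      refine Submodule.mem_sup_left ?_
      rw [← Fintype.range_linearCombination]
      refine ⟨w, ?_⟩
      ext ⟨k', j⟩
      simp only [Fintype.linearCombination_apply, Finset.sum_apply, Pi.smul_apply, smul_eq_mul,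
        Pi.single_apply, X, Prod.mk.injEq]
      by_cases h : k' = ⟨q - 1, Nat.sub_one_lt hq.ne'⟩ <;> simp [h]
    | succ t ih =>
      intro k hk w
      obtain ⟨w, rfl⟩ := hB w
      have hk1 : (k : ℕ) + 1 < q := by omega
      have h1 := ih ⟨k + 1, hk1⟩ (by simp; omega)
      have h2 : X k (B *ᵥ w) = (jordanBlock F q ⊗ₖ B - 1).mulVecLin (X ⟨k + 1, hk1⟩ w)
          + X ⟨k + 1, hk1⟩ w - X ⟨k + 1, hk1⟩ (B *ᵥ w) := by
        have hX : ∀ (l k' : Fin q) j, (B *ᵥ fun j' => X l w (k', j')) j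
            = if k' = l then (B *ᵥ w) j else 0 := by
          intro l k' j
          by_cases h : k' = l
          · simp [X, h]
          · simp only [X, h, if_false]
            exact congrFun (Matrix.mulVec_zero B) j
        ext ⟨k', j⟩
        simp only [Matrix.mulVecLin_apply, Matrix.sub_mulVec, Matrix.one_mulVec, Pi.sub_apply,
          Pi.add_apply, kronecker_mulVec_apply, jordanBlock_mulVec, hX]
        simp only [X, Fin.ext_iff]
        split_ifs <;> first | omega | simp
      rw [h2]
      exact U.sub_mem (U.add_mem (Submodule.mem_sup_right ⟨_, rfl⟩) (h1 _)) (h1 _)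
  rw [eq_top_iff]
  intro v _
  have hv : v = ∑ k, X k (fun j => v (k, j)) := by
    ext ⟨k, j⟩
    simp [X, Finset.sum_apply]
  rw [hv]
  exact U.sum_mem fun k _ => key (q - 1 - k) k (by omega) (fun j => v (k, j))

/-! ### The two short exact sequences -/

/-- The short exact sequence `0 → J_{q-r} ⊗ B → J_q ⊗ B → J_r ⊗ B → 0`: the first map includes
the first `q - r` coordinates, the second one keeps the last `r` coordinates. -/
lemma exists_exact_kronecker {F : Type*} [Field F] (q r s : ℕ) (hr : r ≤ q)
    (B : Matrix (Fin s) (Fin s) F) :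
    ∃ (j : (Fin (q - r) × Fin s → F) →ₗ[F] (Fin q × Fin s → F))
      (φ : (Fin q × Fin s → F) →ₗ[F] (Fin r × Fin s → F)),
      Function.Injective j ∧
      (∀ x, j ((jordanBlock F (q - r) ⊗ₖ B) *ᵥ x) = (jordanBlock F q ⊗ₖ B) *ᵥ j x) ∧
      Function.Surjective φ ∧
      (∀ x, φ ((jordanBlock F q ⊗ₖ B) *ᵥ x) = (jordanBlock F r ⊗ₖ B) *ᵥ φ x) ∧
      ∀ x, φ x = 0 ↔ ∃ a, j a = x := by
  let j : (Fin (q - r) × Fin s → F) →ₗ[F] (Fin q × Fin s → F) :=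
    { toFun := fun g kj => if h : (kj.1 : ℕ) < q - r then g (⟨kj.1, h⟩, kj.2) else 0
      map_add' := by
        intro x y; ext kj; simp only [Pi.add_apply]; split_ifs <;> simp
      map_smul' := by
        intro c x; ext kj; simp only [Pi.smul_apply, RingHom.id_apply]; split_ifs <;> simp }
  let φ : (Fin q × Fin s → F) →ₗ[F] (Fin r × Fin s → F) :=
    LinearMap.funLeft F F fun kj => (⟨kj.1 + (q - r), by omega⟩, kj.2)
  have hj : ∀ g k i, j g (k, i) = if h : (k : ℕ) < q - r then g (⟨k, h⟩, i) else 0 :=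
    fun _ _ _ => rfl
  have hφ : ∀ f k i, φ f (k, i) = f (⟨k + (q - r), by omega⟩, i) := fun _ _ _ => rfl
  refine ⟨j, φ, ?_, ?_, ?_, ?_, ?_⟩
  · intro x y hxy
    ext ⟨k, i⟩
    have := congrFun hxy (⟨k, by omega⟩, i)
    simpa [hj] using this
  · intro x
    have hjB : ∀ (k : Fin q) i, (B *ᵥ fun i' => j x (k, i')) i =
        if h : (k : ℕ) < q - r then (B *ᵥ fun i' => x (⟨k, h⟩, i')) i else 0 := by
      intro k i
      simp only [hj]
      split_ifs with h
      · rfl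
      · exact congrFun (Matrix.mulVec_zero B) i
    ext ⟨k, i⟩
    rw [hj]
    simp only [kronecker_mulVec_apply, jordanBlock_mulVec, hjB]
    split_ifs <;> first | omega | simp
  · intro y
    refine ⟨fun ki => if h : (ki.1 : ℕ) - (q - r) < r then y (⟨ki.1 - (q - r), h⟩, ki.2) else 0, ?_⟩
    ext ⟨k, i⟩
    simp [hφ]
  · intro x
    ext ⟨k, i⟩
    simp only [hφ, kronecker_mulVec_apply, jordanBlock_mulVec]
    congr 1
    split_ifs
    · simp only [show (k : ℕ) + (q - r) + 1 = k + 1 + (q - r) by omega]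
    · omega
    · omega
    · rfl
  · intro x
    constructor
    · intro hx
      refine ⟨fun ki => x (⟨ki.1, by omega⟩, ki.2), ?_⟩
      ext ⟨k, i⟩
      rw [hj]
      split_ifs with h
      · rfl
      · have := congrFun hx (⟨k - (q - r), by omega⟩, i)
        rw [hφ] at this
        simp only [show (k : ℕ) - (q - r) + (q - r) = k by omega] at this
        exact this.symm
    · rintro ⟨a, rfl⟩
      ext ⟨k, i⟩
      rw [hφ, hj, dif_neg (by simp)]
      rfl

/-- The short exact sequence
`0 → (⨁_κ J_q) ⊕ ⨁ᵢ J_{q-λᵢ} → (⨁_κ J_q) ⊕ ⨁ᵢ J_q → ⨁ᵢ J_{λᵢ} → 0`. -/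
lemma exists_exact_jordanBlockDiag {F : Type*} [Field F] {κ ι : Type} [Fintype κ] [Fintype ι]
    [DecidableEq κ] [DecidableEq ι] (q : ℕ) (lam : ι → ℕ) (hlam : ∀ i, lam i ≤ q) :
    ∃ (j : ((i : κ ⊕ ι) × Fin (Sum.elim (fun _ : κ => q) (fun i : ι => q - lam i) i) → F)
        →ₗ[F] ((_ : κ ⊕ ι) × Fin q → F))
      (φ : ((_ : κ ⊕ ι) × Fin q → F) →ₗ[F] ((i : ι) × Fin (lam i) → F)),
      Function.Injective j ∧
      (∀ x, j (jordanBlockDiag F (Sum.elim (fun _ : κ => q) (fun i : ι => q - lam i)) *ᵥ x) =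
        jordanBlockDiag F (fun _ : κ ⊕ ι => q) *ᵥ j x) ∧
      Function.Surjective φ ∧
      (∀ x, φ (jordanBlockDiag F (fun _ : κ ⊕ ι => q) *ᵥ x) = jordanBlockDiag F lam *ᵥ φ x) ∧
      ∀ x, φ x = 0 ↔ ∃ a, j a = x := by
  set d : κ ⊕ ι → ℕ := Sum.elim (fun _ : κ => q) (fun i : ι => q - lam i) with hd
  have hdq : ∀ i, d i ≤ q := by
    rintro (i | i) <;> simp [hd]
  have hdr : ∀ i, d (Sum.inr i) = q - lam i := fun _ => rfl
  let j : ((i : κ ⊕ ι) × Fin (d i) → F) →ₗ[F] ((_ : κ ⊕ ι) × Fin q → F) :=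
    { toFun := fun g ik => if h : (ik.2 : ℕ) < d ik.1 then g ⟨ik.1, ⟨ik.2, h⟩⟩ else 0
      map_add' := by
        intro x y; ext kj; simp only [Pi.add_apply]; split_ifs <;> simp
      map_smul' := by
        intro c x; ext kj; simp only [Pi.smul_apply, RingHom.id_apply]; split_ifs <;> simp }
  let φ : ((_ : κ ⊕ ι) × Fin q → F) →ₗ[F] ((i : ι) × Fin (lam i) → F) :=
    LinearMap.funLeft F F fun ik => ⟨Sum.inr ik.1, ⟨ik.2 + (q - lam ik.1), by
      have := ik.2.2; have := hlam ik.1; omega⟩⟩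
  have hj : ∀ g i k, j g ⟨i, k⟩ = if h : (k : ℕ) < d i then g ⟨i, ⟨k, h⟩⟩ else 0 :=
    fun _ _ _ => rfl
  have hφ : ∀ f i (k : Fin (lam i)), φ f ⟨i, k⟩ = f ⟨Sum.inr i, ⟨k + (q - lam i), by
      have := hlam i; omega⟩⟩ := fun _ _ _ => rfl
  refine ⟨j, φ, ?_, ?_, ?_, ?_, ?_⟩
  · intro x y hxy
    ext ⟨i, k⟩
    have := congrFun hxy ⟨i, ⟨k, by have := hdq i; omega⟩⟩
    simpa [hj] using this
  · intro x
    ext ⟨i, k⟩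
    have := hdq i
    simp only [hj, jordanBlockDiag_mulVec]
    split_ifs <;> first | omega | simp
  · intro y
    refine ⟨fun ik => Sum.elim (fun _ => 0) (fun i =>
      if h : (ik.2 : ℕ) - (q - lam i) < lam i then y ⟨i, ⟨ik.2 - (q - lam i), h⟩⟩ else 0) ik.1, ?_⟩
    ext ⟨i, k⟩
    simp [hφ]
  · intro x
    ext ⟨i, k⟩
    have := hlam i
    simp only [hφ, jordanBlockDiag_mulVec]
    congr 1
    split_ifs
    · simp only [show (k : ℕ) + (q - lam i) + 1 = k + 1 + (q - lam i) by omega]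
    · omega
    · omega
    · rfl
  · intro x
    constructor
    · intro hx
      refine ⟨fun ik => x ⟨ik.1, ⟨ik.2, by have := hdq ik.1; omega⟩⟩, ?_⟩
      ext ⟨i, k⟩
      rw [hj]
      split_ifs with h
      · rfl
      · rcases i with i | i
        · exact absurd k.2 h
        · rw [hdr] at h
          have := hlam i
          have := congrFun hx ⟨i, ⟨k - (q - lam i), by omega⟩⟩
          rw [hφ] at this
          simp only [show (k : ℕ) - (q - lam i) + (q - lam i) = k by omega] at this
          exact this.symm
    · rintro ⟨a, rfl⟩
      ext ⟨i, k⟩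
      rw [hφ, hj, dif_neg (by simp [hdr])]
      rfl

/-- Green's duality: from a decomposition of `J_r ⊗ J_s` one obtains a decomposition of
`J_{pⁿ−r} ⊗ J_s`. (Blocks `J_{pⁿ−λᵢ}` with `λᵢ = pⁿ` are empty, i.e. omitted.) -/
theorem stmt_5 {F : Type*} [Field F] (p : ℕ) (hp : p.Prime) [CharP F p]
    (n : ℕ) (hn : 0 < n) (r s : ℕ) (hr : 1 ≤ r) (hr' : r ≤ p ^ n - 1)
    (hs : 1 ≤ s) (hs' : s ≤ p ^ n)
    (b : ℕ) (hb : b = min r s)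
    (lam : Fin b → ℕ) (hanti : Antitone lam) (hpos : ∀ i, 0 < lam i)
    (hsim : MatSimilar F (jordanBlock F r ⊗ₖ jordanBlock F s) (jordanBlockDiag F lam)) :
    (∀ i, lam i ≤ p ^ n) ∧
    MatSimilar F (jordanBlock F (p ^ n - r) ⊗ₖ jordanBlock F s)
      (jordanBlockDiag F (Sum.elim (fun _ : Fin (s - b) => p ^ n)
        (fun i : Fin b => p ^ n - lam i))) := by
  have hq : 0 < p ^ n := pow_pos hp.pos n
  obtain ⟨e, he⟩ := hsim
  have hlam : ∀ i, lam i ≤ p ^ n := by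
    intro i
    by_contra hi
    push Not at hi
    -- `e_{pⁿ}` of block `i` would survive the `pⁿ`-th power of the nilpotent part.
    have h := intertwine_sub_one_pow _ _ e.toLinearMap he (p ^ n)
      (e.symm (Pi.single ⟨i, ⟨p ^ n, hi⟩⟩ 1))
    rw [jordanBlock_kronecker_nilpotent p hp n r s (by omega) hs', Matrix.zero_mulVec,
      map_zero] at h
    have h' := congrFun h ⟨i, ⟨0, hpos i⟩⟩
    rw [jordanBlockDiag_sub_one_pow_mulVec] at h'
    simp [hi] at h'
  refine ⟨hlam, ?_⟩
  obtain ⟨j₂, φ₂, hj₂, hjc₂, hs₂, hc₂, hex₂⟩ :=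
    exists_exact_kronecker (F := F) (p ^ n) r s (by omega) (jordanBlock F s)
  obtain ⟨j₁, φ₁, hj₁, hjc₁, hs₁, hc₁, hex₁⟩ :=
    exists_exact_jordanBlockDiag (F := F) (κ := Fin (s - b)) (p ^ n) lam hlam
  have hB : Function.Surjective (jordanBlock F s).mulVec := by
    intro w
    refine ⟨jordanBlock F s ^ (p ^ n - 1) *ᵥ w, ?_⟩
    rw [Matrix.mulVec_mulVec, ← pow_succ', Nat.sub_add_cancel hq,
      jordanBlock_pow_charP p hp n s hs', Matrix.one_mulVec]
  have hbs : b ≤ s := hb ▸ min_le_right r s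
  let φ₂' : (Fin (p ^ n) × Fin s → F) →ₗ[F] _ := e.toLinearMap ∘ₗ φ₂
  have hc₂' : ∀ x, φ₂' ((jordanBlock F (p ^ n) ⊗ₖ jordanBlock F s) *ᵥ x) =
      jordanBlockDiag F lam *ᵥ φ₂' x := by
    intro x
    simp only [φ₂', LinearMap.comp_apply, hc₂, LinearEquiv.coe_coe, he]
  have hnil : (jordanBlock F (p ^ n) ⊗ₖ jordanBlock F s - 1).mulVecLin ^ p ^ n = 0 := by
    have h := jordanBlock_kronecker_nilpotent (F := F) p hp n (p ^ n) s le_rfl hs'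
    rw [← Matrix.toLin'_apply', ← Matrix.toLin'_pow, h, map_zero]
  have hnil₁ : (jordanBlockDiag F
      (fun _ : Fin (s - b) ⊕ Fin b => p ^ n) - 1).mulVecLin ^ p ^ n = 0 := by
    rw [← Matrix.toLin'_apply', ← Matrix.toLin'_pow]
    refine LinearMap.ext fun v => funext fun ⟨i, k⟩ => ?_
    rw [Matrix.toLin'_apply, jordanBlockDiag_sub_one_pow_mulVec, dif_neg (by omega)]
    rfl
  obtain ⟨θ, hθN, hθφ⟩ := exists_equiv_of_free (p ^ n)
    (jordanBlockDiag F (fun _ : Fin (s - b) ⊕ Fin b => p ^ n) - 1).mulVecLin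
    (jordanBlock F (p ^ n) ⊗ₖ jordanBlock F s - 1).mulVecLin
    (jordanBlockDiag F lam - 1).mulVecLin
    hnil₁ hnil φ₁ φ₂'
    (fun x => by simpa only [pow_one, Matrix.mulVecLin_apply] using
      intertwine_sub_one_pow _ _ φ₁ hc₁ 1 x)
    (fun x => by simpa only [pow_one, Matrix.mulVecLin_apply] using
      intertwine_sub_one_pow _ _ φ₂' hc₂' 1 x)
    hs₁ (e.surjective.comp hs₂)
    _ _
    (by simp; omega)
    (by simp [Nat.sub_add_cancel hbs, mul_comm])
    (jordanBlockDiag_generate (p ^ n) hq)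
    (kronecker_generate (p ^ n) s hq _ hB)
    (fun v => jordanBlockDiag_lift (p ^ n) hq _ hnil v)
  obtain ⟨f, hf⟩ := exists_equiv_of_ker
    (fun v => jordanBlockDiag F (Sum.elim (fun _ : Fin (s - b) => p ^ n)
        (fun i : Fin b => p ^ n - lam i)) *ᵥ v)
    (fun v => (jordanBlock F (p ^ n - r) ⊗ₖ jordanBlock F s) *ᵥ v)
    (fun v => jordanBlockDiag F (fun _ : Fin (s - b) ⊕ Fin b => p ^ n) *ᵥ v)
    (fun v => (jordanBlock F (p ^ n) ⊗ₖ jordanBlock F s) *ᵥ v)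
    φ₁ φ₂' θ
    (fun x => by
      have h := hθN x
      rw [Matrix.mulVecLin_apply, Matrix.mulVecLin_apply, Matrix.sub_mulVec, Matrix.sub_mulVec,
        Matrix.one_mulVec, Matrix.one_mulVec, map_sub] at h
      exact sub_left_inj.1 h)
    hθφ j₁ j₂ hj₁ hj₂ hjc₁ hjc₂ hex₁
    (fun x => by
      rw [← hex₂]
      simp [φ₂'])
  refine ⟨f.symm, fun v => f.injective ?_⟩
  rw [hf]
  simp
end

section
/- Let p be a prime, F a field of characteristic p, n a positive integer, and r, s positive integers with r ≤ p^n, s ≤ p^n and r + s > p^n. Suppose the Kronecker product J_r ⊗ J_s is similar over F to the block-diagonal matrix with diagonal blocks J_{λ_1},…,J_{λ_b}, where b = min(r,s) and λ_1 ≥ ⋯ ≥ λ_b > 0. Then the largest part λ_1 equals p^n, and the number of indices i with λ_i = p^n is exactly r + s − p^n. -/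
/-!
Put `q = pⁿ`, let `X`, `Y` be the nilpotent shifts `(J_r - 1) ⊗ 1` and `1 ⊗ (J_s - 1)`, and let
`N = (1 + X)(1 + Y) - 1 = X (1 + Y) + Y` be the nilpotent part of `J_r ⊗ J_s`. Since `X` and `Y`
commute, `N^q = X^q (1 + Y)^q + Y^q = 0` in characteristic `p`, so every part is at most `q`
(`kronNil_pow_eq_zero`). On the block-diagonal side, the number of parts equal to `q` is then the
rank of the `(q-1)`-st power of the nilpotent part (`finrank_range_shiftD`), so it remains to show
that `N^(q-1)` has rank `c = r + s - q` (`finrank_range_kronNil`).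

Expanding `N^(q-1)` binomially, `Y^c N^(q-1) = 0`, while `Y^(c-1) N^(q-1)` equals
`(q-1).choose (r-1) • X^(r-1) Y^(s-1)`, which is nonzero because `(q-1).choose k` is never divisible
by `p` for `k < q`. Hence `Y` acts on the range of `N^(q-1)` with nilpotency index exactly `c`, so
the rank is at least `c`. Conversely a vector `v` in this range satisfies `N v = 0`, hence is
determined by its row `v(0, ·)` (`eq_zero_of_kronNil_eq_zero`), and `Y^c v = 0`, so only `c` entries
of that row can be nonzero.
-/

open Kronecker

/-! ### Shift operators -/

/-- The shift `(X v)(i, j) = v(i + 1, j)` in the first variable, i.e. `(J_r - 1) ⊗ 1`. -/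
def shiftX (F : Type*) [Field F] (r s : ℕ) : Module.End F (Fin r × Fin s → F) where
  toFun v a := if h : (a.1 : ℕ) + 1 < r then v (⟨a.1 + 1, h⟩, a.2) else 0
  map_add' v w := by ext a; by_cases h : (a.1 : ℕ) + 1 < r <;> simp [h]
  map_smul' c v := by ext a; by_cases h : (a.1 : ℕ) + 1 < r <;> simp [h]

/-- The shift `(Y v)(i, j) = v(i, j + 1)` in the second variable, i.e. `1 ⊗ (J_s - 1)`. -/
def shiftY (F : Type*) [Field F] (r s : ℕ) : Module.End F (Fin r × Fin s → F) where
  toFun v a := if h : (a.2 : ℕ) + 1 < s then v (a.1, ⟨a.2 + 1, h⟩) else 0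
  map_add' v w := by ext a; by_cases h : (a.2 : ℕ) + 1 < s <;> simp [h]
  map_smul' c v := by ext a; by_cases h : (a.2 : ℕ) + 1 < s <;> simp [h]

/-- The nilpotent part of the block-diagonal Jordan matrix: the shift inside every block. -/
def shiftD (F : Type*) [Field F] {ι : Type} (d : ι → ℕ) :
    Module.End F (((i : ι) × Fin (d i)) → F) where
  toFun v a := if h : (a.2 : ℕ) + 1 < d a.1 then v ⟨a.1, ⟨a.2 + 1, h⟩⟩ else 0
  map_add' v w := by ext a; by_cases h : (a.2 : ℕ) + 1 < d a.1 <;> simp [h]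
  map_smul' c v := by ext a; by_cases h : (a.2 : ℕ) + 1 < d a.1 <;> simp [h]

section
variable {F : Type*} [Field F]

lemma shiftX_apply (r s : ℕ) (v : Fin r × Fin s → F) (a : Fin r × Fin s) :
    shiftX F r s v a = if h : (a.1 : ℕ) + 1 < r then v (⟨a.1 + 1, h⟩, a.2) else 0 := rfl

lemma shiftY_apply (r s : ℕ) (v : Fin r × Fin s → F) (a : Fin r × Fin s) :
    shiftY F r s v a = if h : (a.2 : ℕ) + 1 < s then v (a.1, ⟨a.2 + 1, h⟩) else 0 := rfl

lemma shiftD_apply {ι : Type} (d : ι → ℕ) (v : ((i : ι) × Fin (d i)) → F)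
    (a : (i : ι) × Fin (d i)) :
    shiftD F d v a = if h : (a.2 : ℕ) + 1 < d a.1 then v ⟨a.1, ⟨a.2 + 1, h⟩⟩ else 0 := rfl

lemma shiftX_pow_apply (r s k : ℕ) (v : Fin r × Fin s → F) (a : Fin r × Fin s) :
    (shiftX F r s ^ k) v a = if h : (a.1 : ℕ) + k < r then v (⟨a.1 + k, h⟩, a.2) else 0 := by
  induction k generalizing a with
  | zero => simp
  | succ k ih =>
    rw [pow_succ', Module.End.mul_apply, shiftX_apply]
    simp only [ih]
    by_cases h : (a.1 : ℕ) + (k + 1) < r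
    · have h1 : (a.1 : ℕ) + 1 < r := by omega
      have h2 : (a.1 : ℕ) + 1 + k < r := by omega
      simp only [h, h1, h2, dif_pos]
      congr 3; omega
    · have h2 : ¬ (a.1 : ℕ) + 1 + k < r := by omega
      simp [h, h2]

lemma shiftY_pow_apply (r s k : ℕ) (v : Fin r × Fin s → F) (a : Fin r × Fin s) :
    (shiftY F r s ^ k) v a = if h : (a.2 : ℕ) + k < s then v (a.1, ⟨a.2 + k, h⟩) else 0 := by
  induction k generalizing a with
  | zero => simp
  | succ k ih =>
    rw [pow_succ', Module.End.mul_apply, shiftY_apply]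
    simp only [ih]
    by_cases h : (a.2 : ℕ) + (k + 1) < s
    · have h1 : (a.2 : ℕ) + 1 < s := by omega
      have h2 : (a.2 : ℕ) + 1 + k < s := by omega
      simp only [h, h1, h2, dif_pos]
      congr 3; omega
    · have h2 : ¬ (a.2 : ℕ) + 1 + k < s := by omega
      simp [h, h2]

lemma shiftD_pow_apply {ι : Type} (d : ι → ℕ) (k : ℕ) (v : ((i : ι) × Fin (d i)) → F)
    (a : (i : ι) × Fin (d i)) :
    (shiftD F d ^ k) v a =
      if h : (a.2 : ℕ) + k < d a.1 then v ⟨a.1, ⟨a.2 + k, h⟩⟩ else 0 := by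
  induction k generalizing a with
  | zero => simp
  | succ k ih =>
    rw [pow_succ', Module.End.mul_apply, shiftD_apply]
    simp only [ih]
    by_cases h : (a.2 : ℕ) + (k + 1) < d a.1
    · have h1 : (a.2 : ℕ) + 1 < d a.1 := by omega
      have h2 : (a.2 : ℕ) + 1 + k < d a.1 := by omega
      simp only [h, h1, h2, dif_pos]
      congr 3; omega
    · have h2 : ¬ (a.2 : ℕ) + 1 + k < d a.1 := by omega
      simp [h, h2]

lemma shiftX_pow_eq_zero {r s k : ℕ} (h : r ≤ k) : shiftX F r s ^ k = 0 := by
  ext1 v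
  ext a
  simp only [LinearMap.comp_apply, shiftX_pow_apply]
  rw [dif_neg (by omega)]; simp

lemma shiftY_pow_eq_zero {r s k : ℕ} (h : s ≤ k) : shiftY F r s ^ k = 0 := by
  ext1 v
  ext a
  simp only [LinearMap.comp_apply, shiftY_pow_apply]
  rw [dif_neg (by omega)]; simp

lemma commute_shift (r s : ℕ) : Commute (shiftX F r s) (shiftY F r s) := by
  refine LinearMap.ext fun v => funext fun a => ?_
  simp only [Module.End.mul_apply, shiftX_apply, shiftY_apply]
  split_ifs <;> rfl

/-! ### The matrices as operators -/

lemma jordanBlock_sum (m : ℕ) (i : Fin m) (f : Fin m → F) :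
    ∑ j, jordanBlock F m i j * f j = f i + if h : (i : ℕ) + 1 < m then f ⟨i + 1, h⟩ else 0 := by
  have h1 : ∀ j : Fin m, jordanBlock F m i j * f j =
      (if j = i then f j else 0) + (if (j : ℕ) = i + 1 then f j else 0) := by
    intro j
    simp only [jordanBlock, Matrix.of_apply, Fin.ext_iff]
    by_cases h : (j : ℕ) = i
    · simp [h]
    · by_cases h' : (j : ℕ) = i + 1 <;> simp [h, h']
  simp only [h1, Finset.sum_add_distrib, Finset.sum_ite_eq', Finset.mem_univ, if_true]
  congr 1
  split_ifs with h
  · rw [Finset.sum_eq_single ⟨i + 1, h⟩]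
    · simp
    · intro j _ hj
      rw [if_neg]
      intro hj'
      exact hj (Fin.ext hj')
    · simp
  · refine Finset.sum_eq_zero fun j _ => ?_
    rw [if_neg (by omega)]

/-- The nilpotent part `(1 + X)(1 + Y) - 1` of `J_r ⊗ J_s`, in the form `X (1 + Y) + Y`
suited to binomial expansion. -/
def kronNil (F : Type*) [Field F] (r s : ℕ) : Module.End F (Fin r × Fin s → F) :=
  shiftX F r s * (1 + shiftY F r s) + shiftY F r s

lemma kron_mulVec (r s : ℕ) (v : Fin r × Fin s → F) :
    (jordanBlock F r ⊗ₖ jordanBlock F s).mulVec v = v + kronNil F r s v := by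
  ext ⟨i, j⟩
  have : (jordanBlock F r ⊗ₖ jordanBlock F s).mulVec v (i, j) =
      ∑ i', jordanBlock F r i i' * ∑ j', jordanBlock F s j j' * v (i', j') := by
    simp only [Matrix.mulVec, dotProduct, Fintype.sum_prod_type, Matrix.kroneckerMap_apply,
      Finset.mul_sum, mul_assoc]
  rw [this]
  simp only [jordanBlock_sum _ _ (fun j' => v (_, j'))]
  rw [jordanBlock_sum r i
    (fun i' => v (i', j) + if h : (j : ℕ) + 1 < s then v (i', ⟨j + 1, h⟩) else 0)]
  simp only [kronNil, LinearMap.add_apply, Module.End.mul_apply, Module.End.one_apply,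
    Pi.add_apply, shiftX_apply, shiftY_apply, map_add]
  split_ifs <;> ring

lemma diag_mulVec {b : ℕ} (d : Fin b → ℕ) (v : ((i : Fin b) × Fin (d i)) → F) :
    (jordanBlockDiag F d).mulVec v = v + shiftD F d v := by
  ext ⟨i, j⟩
  have : (jordanBlockDiag F d).mulVec v ⟨i, j⟩ =
      ∑ j', jordanBlock F (d i) j j' * v ⟨i, j'⟩ := by
    simp only [Matrix.mulVec, dotProduct, Fintype.sum_sigma, jordanBlockDiag]
    rw [Finset.sum_eq_single i]
    · simp [Matrix.blockDiagonal'_apply_eq]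
    · intro i' _ hi
      refine Finset.sum_eq_zero fun j' _ => ?_
      rw [Matrix.blockDiagonal'_apply_ne _ _ _ (Ne.symm hi), zero_mul]
    · simp
  rw [this, jordanBlock_sum (d i) j (fun j' => v ⟨i, j'⟩)]
  rfl

/-! ### The block-diagonal side -/

lemma le_of_shiftD_pow_eq_zero {ι : Type} (d : ι → ℕ) (q : ℕ)
    (h : shiftD F d ^ q = 0) (i : ι) : d i ≤ q := by
  by_contra! hq
  have := congrFun (LinearMap.congr_fun h (fun _ => 1)) ⟨i, ⟨0, by omega⟩⟩
  rw [shiftD_pow_apply, dif_pos (by simpa using hq)] at this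
  simp at this

/-- When all blocks have size at most `q`, the kernel of the `(q-1)`-st power of the shift
consists of the vectors whose last coordinate vanishes in every block of size `q`. -/
lemma finrank_range_shiftD {b : ℕ} (d : Fin b → ℕ) (q : ℕ) (hq : 0 < q) (hd : ∀ i, d i ≤ q) :
    Module.finrank F (LinearMap.range (shiftD F d ^ (q - 1))) =
      (Finset.univ.filter fun i => d i = q).card := by
  let g : (((i : Fin b) × Fin (d i)) → F) →ₗ[F] ({i // d i = q} → F) :=
    LinearMap.funLeft F F fun i => ⟨i.1, ⟨q - 1, by have := i.2; omega⟩⟩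
  have hg : Function.Surjective g := by
    apply LinearMap.funLeft_surjective_of_injective
    intro i j hij
    exact Subtype.ext (congrArg Sigma.fst hij)
  have hker : LinearMap.ker (shiftD F d ^ (q - 1)) = LinearMap.ker g := by
    ext v
    simp only [LinearMap.mem_ker]
    constructor
    · intro h
      ext ⟨i, hi⟩
      have := congrFun h ⟨i, ⟨0, by omega⟩⟩
      rw [shiftD_pow_apply, dif_pos (by simp; omega)] at this
      simpa [g, LinearMap.funLeft_apply] using this
    · intro h
      ext ⟨i, j⟩
      rw [shiftD_pow_apply]
      split_ifs with h1
      · have h2 := hd i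
        have hj := j.2
        simp only at h1
        have := congrFun h ⟨i, by omega⟩
        simp only [g, LinearMap.funLeft_apply] at this
        have hj0 : (j : ℕ) = 0 := by omega
        simpa [hj0] using this
      · rfl
  have h1 := LinearMap.finrank_range_add_finrank_ker (shiftD F d ^ (q - 1))
  have h2 := LinearMap.finrank_range_add_finrank_ker g
  rw [LinearMap.range_eq_top.2 hg, finrank_top, Module.finrank_fintype_fun_eq_card,
    Fintype.card_subtype] at h2
  rw [hker] at h1
  omega

/-! ### The Kronecker product side -/

lemma cast_choose_prime_pow_pred_ne_zero (p : ℕ) (hp : p.Prime) [CharP F p] (n k : ℕ)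
    (hk : k < p ^ n) : ((p ^ n - 1).choose k : F) ≠ 0 := by
  induction k with
  | zero => simp
  | succ k ih =>
    have h0 : p ∣ (p ^ n).choose (k + 1) := hp.dvd_choose_pow (by omega) (by omega)
    have h1 : (p ^ n).choose (k + 1) = (p ^ n - 1).choose k + (p ^ n - 1).choose (k + 1) := by
      rw [← Nat.choose_succ_succ]; congr 1; omega
    have h2 : (((p ^ n).choose (k + 1) : ℕ) : F) = 0 := (CharP.cast_eq_zero_iff F p _).2 h0
    rw [h1, Nat.cast_add] at h2
    intro h3
    rw [h3, add_zero] at h2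
    exact ih (by omega) h2

lemma kronNil_pow_eq_zero (p : ℕ) (hp : p.Prime) [CharP F p] (n r s : ℕ)
    (hr : 0 < r) (hs : 0 < s) (hr' : r ≤ p ^ n) (hs' : s ≤ p ^ n) :
    kronNil F r s ^ (p ^ n) = 0 := by
  have : Fact p.Prime := ⟨hp⟩
  have : Nonempty (Fin r × Fin s) := ⟨(⟨0, hr⟩, ⟨0, hs⟩)⟩
  have : CharP (Module.End F (Fin r × Fin s → F)) p :=
    charP_of_injective_algebraMap (algebraMap F _).injective p
  have c := commute_shift (F := F) r s
  have c1 : Commute (shiftX F r s) (1 + shiftY F r s) := (Commute.one_right _).add_right c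
  have c2 : Commute (1 + shiftY F r s) (shiftY F r s) :=
    (Commute.one_left _).add_left (Commute.refl _)
  rw [kronNil, add_pow_char_pow_of_commute _ _ (c.mul_left c2), c1.mul_pow,
    shiftX_pow_eq_zero hr', shiftY_pow_eq_zero hs']
  simp

/-- Expansion of `Yᵃ N^m` for `N = X (1 + Y) + Y`. -/
lemma shiftY_pow_mul_kronNil_pow (r s a m : ℕ) :
    shiftY F r s ^ a * kronNil F r s ^ m = ∑ k ∈ Finset.range (m + 1),
      (m.choose k : F) • (shiftX F r s ^ k * (1 + shiftY F r s) ^ k *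
        shiftY F r s ^ (a + (m - k))) := by
  have c := commute_shift (F := F) r s
  have c1 : Commute (shiftX F r s) (1 + shiftY F r s) := (Commute.one_right _).add_right c
  have c2 : Commute (1 + shiftY F r s) (shiftY F r s) :=
    (Commute.one_left _).add_left (Commute.refl _)
  rw [kronNil, (c.mul_left c2).add_pow, Finset.mul_sum]
  refine Finset.sum_congr rfl fun k _ => ?_
  have c3 : Commute (shiftY F r s ^ a) ((shiftX F r s * (1 + shiftY F r s)) ^ k) :=
    ((c.mul_left c2).pow_pow k a).symm
  rw [← mul_assoc, ← mul_assoc, c3.eq, mul_assoc _ (shiftY F r s ^ a), ← pow_add, c1.mul_pow,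
    ← nsmul_eq_mul', Nat.cast_smul_eq_nsmul]

/-- With `c = r + s - q`, every term of `Y^c N^(q-1)` contains `X^r` or `Y^s`. -/
lemma shiftY_pow_mul_kronNil_pow_eq_zero (q r s : ℕ) (hr' : r ≤ q)
    (hrs : q < r + s) :
    shiftY F r s ^ (r + s - q) * kronNil F r s ^ (q - 1) = 0 := by
  rw [shiftY_pow_mul_kronNil_pow]
  refine Finset.sum_eq_zero fun k hk => ?_
  rw [Finset.mem_range] at hk
  by_cases h : r ≤ k
  · rw [shiftX_pow_eq_zero h]; simp
  · rw [shiftY_pow_eq_zero (by omega)]; simp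

/-- With `c = r + s - q`, the only surviving term of `Y^(c-1) N^(q-1)` is
`(q-1).choose (r-1) • X^(r-1) Y^(s-1)`, whose coefficient is nonzero in characteristic `p`. -/
lemma shiftY_pow_mul_kronNil_pow_ne_zero (p : ℕ) (hp : p.Prime) [CharP F p] (n r s : ℕ)
    (hr : 0 < r) (hs : 0 < s) (hr' : r ≤ p ^ n) (hrs : p ^ n < r + s) :
    shiftY F r s ^ (r + s - p ^ n - 1) * kronNil F r s ^ (p ^ n - 1) ≠ 0 := by
  have hc := cast_choose_prime_pow_pred_ne_zero (F := F) p hp n (r - 1) (by omega)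
  have hq : 0 < p ^ n := by omega
  generalize p ^ n = q at *
  -- `(1 + Y)^k` acts as the identity on the image of `Y^(s-1)`
  have key : ∀ k, (1 + shiftY F r s) ^ k * shiftY F r s ^ (s - 1) = shiftY F r s ^ (s - 1) := by
    intro k
    induction k with
    | zero => simp
    | succ k ih =>
      rw [pow_succ, mul_assoc, add_mul, ← pow_succ', shiftY_pow_eq_zero (k := s - 1 + 1) (by omega)]
      simpa using ih
  rw [shiftY_pow_mul_kronNil_pow, Finset.sum_eq_single (r - 1)]
  · rw [show r + s - q - 1 + (q - 1 - (r - 1)) = s - 1 by omega, mul_assoc, key]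
    intro h
    rw [smul_eq_zero_iff_right hc] at h
    have := congrFun (LinearMap.congr_fun h (fun _ => 1)) (⟨0, hr⟩, ⟨0, hs⟩)
    rw [Module.End.mul_apply, shiftX_pow_apply, dif_pos (by simp; omega), shiftY_pow_apply,
      dif_pos (by simp; omega)] at this
    simp at this
  · intro k hk hkr
    rw [Finset.mem_range] at hk
    by_cases h : r ≤ k
    · rw [shiftX_pow_eq_zero h]; simp
    · rw [shiftY_pow_eq_zero (by omega)]; simp
  · intro h
    exact absurd (Finset.mem_range.2 (by omega)) h

/-- A vector killed by `N = X (1 + Y) + Y` is determined by its row `i = 0`. -/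
lemma eq_zero_of_kronNil_eq_zero (r s : ℕ) (v : Fin r × Fin s → F) (hv : kronNil F r s v = 0)
    (h0 : ∀ (h : 0 < r) (j : Fin s), v (⟨0, h⟩, j) = 0) : v = 0 := by
  -- `N v = 0` reads `v(i+1,j) + v(i+1,j+1) + v(i,j+1) = 0`, solved by descending `j`
  have main : ∀ i (hi : i < r), ∀ j : Fin s, v (⟨i, hi⟩, j) = 0 := by
    intro i
    induction i with
    | zero => exact h0
    | succ i ih =>
      intro hi
      have : ∀ t (j : Fin s), s - (j : ℕ) = t → v (⟨i + 1, hi⟩, j) = 0 := by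
        intro t
        induction t with
        | zero => intro j hj; omega
        | succ t iht =>
          intro j hj
          have := congrFun hv (⟨i, by omega⟩, j)
          simp only [kronNil, LinearMap.add_apply, Module.End.mul_apply, Module.End.one_apply,
            Pi.add_apply, shiftX_apply, shiftY_apply, map_add, Pi.zero_apply] at this
          simp only [hi, dif_pos] at this
          split_ifs at this with h1
          · rw [iht ⟨j + 1, h1⟩ (by simp; omega), ih (by omega)] at this
            simpa using this
          · simpa using this
      intro j
      exact this _ j rfl
  ext ⟨i, j⟩
  exact main i i.2 j

lemma finrank_range_kronNil (p : ℕ) (hp : p.Prime) [CharP F p] (n r s : ℕ)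
    (hr : 0 < r) (hs : 0 < s) (hr' : r ≤ p ^ n) (hs' : s ≤ p ^ n) (hrs : p ^ n < r + s) :
    Module.finrank F (LinearMap.range (kronNil F r s ^ (p ^ n - 1))) = r + s - p ^ n := by
  have hq : 0 < p ^ n := by omega
  have hN := kronNil_pow_eq_zero (F := F) p hp n r s hr hs hr' hs'
  have hY := shiftY_pow_mul_kronNil_pow_eq_zero (F := F) (p ^ n) r s hr' hrs
  have hY' := shiftY_pow_mul_kronNil_pow_ne_zero (F := F) p hp n r s hr hs hr' hrs
  have c2 : Commute (shiftY F r s) (kronNil F r s) := by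
    have c := (commute_shift (F := F) r s).symm
    exact (c.mul_right ((Commute.one_right _).add_right (Commute.refl _))).add_right
      (Commute.refl _)
  generalize p ^ n = q at *
  apply le_antisymm
  · -- restriction to the coordinates `(0, j)`, `j < c`, is injective on the range
    let g : (Fin r × Fin s → F) →ₗ[F] (Fin (r + s - q) → F) :=
      LinearMap.funLeft F F fun j => (⟨0, hr⟩, ⟨j, by omega⟩)
    have hinj : Function.Injective (g.comp (LinearMap.range (kronNil F r s ^ (q - 1))).subtype) := by
      rw [← LinearMap.ker_eq_bot, LinearMap.ker_eq_bot']
      rintro ⟨v, w, rfl⟩ hv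
      apply Subtype.ext
      simp only [LinearMap.comp_apply, Submodule.subtype_apply] at hv ⊢
      apply eq_zero_of_kronNil_eq_zero
      · rw [← Module.End.mul_apply, ← pow_succ', Nat.sub_add_cancel hq, hN]; rfl
      · intro h j
        by_cases hj : (j : ℕ) < r + s - q
        · exact congrFun hv ⟨j, hj⟩
        · have := congrFun (LinearMap.congr_fun hY w)
            (⟨0, h⟩, ⟨j - (r + s - q), by omega⟩)
          rw [Module.End.mul_apply, shiftY_pow_apply, dif_pos (by simp; omega)] at this
          simpa [Nat.sub_add_cancel (not_lt.1 hj)] using this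
    simpa using LinearMap.finrank_le_finrank_of_injective hinj
  · -- `Y` acts on the range with nilpotency index exactly `c`
    by_contra! hlt
    have hmaps : ∀ v ∈ LinearMap.range (kronNil F r s ^ (q - 1)),
        shiftY F r s v ∈ LinearMap.range (kronNil F r s ^ (q - 1)) := by
      rintro _ ⟨w, rfl⟩
      refine ⟨shiftY F r s w, ?_⟩
      rw [← Module.End.mul_apply, ← Module.End.mul_apply, (c2.pow_right (q - 1)).eq]
    let y := (shiftY F r s).restrict hmaps
    have hker := (Module.End.ker_pow_eq_ker_pow_finrank_of_le (f := y)
      (m := r + s - q - 1) (by omega)).trans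
      (Module.End.ker_pow_eq_ker_pow_finrank_of_le (f := y) (m := r + s - q) (by omega)).symm
    have hyv : ∀ k (v : LinearMap.range (kronNil F r s ^ (q - 1))),
        ((y ^ k) v : Fin r × Fin s → F) = (shiftY F r s ^ k) v := by
      intro k v
      simp only [y]
      rw [Module.End.pow_restrict k]
      rfl
    apply hY'
    refine LinearMap.ext fun w => ?_
    have hw : (⟨_, w, rfl⟩ : LinearMap.range (kronNil F r s ^ (q - 1))) ∈
        LinearMap.ker (y ^ (r + s - q - 1)) := by
      rw [hker, LinearMap.mem_ker]
      apply Subtype.ext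
      rw [hyv]
      exact LinearMap.congr_fun hY w
    rw [LinearMap.mem_ker] at hw
    have := congrArg Subtype.val hw
    rw [hyv] at this
    exact this

end

/-- If `r + s > pⁿ` (with `r, s ≤ pⁿ`), the largest part of the Jordan partition is `pⁿ`
and it occurs with multiplicity `r + s − pⁿ`. -/
theorem stmt_6 {F : Type*} [Field F] (p : ℕ) (hp : p.Prime) [CharP F p]
    (n : ℕ) (hn : 0 < n) (r s : ℕ) (hr : 0 < r) (hs : 0 < s)
    (hr' : r ≤ p ^ n) (hs' : s ≤ p ^ n) (hrs : p ^ n < r + s)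
    (b : ℕ) (hb : b = min r s)
    (lam : Fin b → ℕ) (hanti : Antitone lam) (hpos : ∀ i, 0 < lam i)
    (hsim : MatSimilar F (jordanBlock F r ⊗ₖ jordanBlock F s) (jordanBlockDiag F lam)) :
    lam ⟨0, by omega⟩ = p ^ n ∧
    (Finset.univ.filter fun i => lam i = p ^ n).card = r + s - p ^ n := by
  obtain ⟨e, he⟩ := hsim
  have hstep : ∀ v, e (kronNil F r s v) = shiftD F lam (e v) := by
    intro v
    have := he v
    rw [kron_mulVec, diag_mulVec, map_add] at this
    exact add_left_cancel this
  have hpow : ∀ k v, e ((kronNil F r s ^ k) v) = (shiftD F lam ^ k) (e v) := by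
    intro k
    induction k with
    | zero => simp
    | succ k ih => intro v; simp only [pow_succ, Module.End.mul_apply, ih, hstep]
  have hle : ∀ i, lam i ≤ p ^ n := by
    refine le_of_shiftD_pow_eq_zero (F := F) lam (p ^ n) (LinearMap.ext fun w => ?_)
    have := hpow (p ^ n) (e.symm w)
    rw [kronNil_pow_eq_zero p hp n r s hr hs hr' hs', e.apply_symm_apply] at this
    simpa using this.symm
  have hrange : LinearMap.range (shiftD F lam ^ (p ^ n - 1)) =
      (LinearMap.range (kronNil F r s ^ (p ^ n - 1))).map e.toLinearMap := by
    ext w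
    simp only [LinearMap.mem_range, Submodule.mem_map]
    constructor
    · rintro ⟨v, rfl⟩
      refine ⟨_, ⟨e.symm v, rfl⟩, ?_⟩
      simpa using hpow (p ^ n - 1) (e.symm v)
    · rintro ⟨_, ⟨v, rfl⟩, rfl⟩
      exact ⟨e v, (hpow _ v).symm⟩
  have hcard : (Finset.univ.filter fun i => lam i = p ^ n).card = r + s - p ^ n := by
    rw [← finrank_range_shiftD (F := F) lam (p ^ n) (by omega) hle, hrange,
      ← finrank_range_kronNil (F := F) p hp n r s hr hs hr' hs' hrs]
    exact LinearEquiv.finrank_map_eq e _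
  refine ⟨le_antisymm (hle _) ?_, hcard⟩
  obtain ⟨i, hi⟩ := Finset.card_pos.1 (by rw [hcard]; omega :
    0 < (Finset.univ.filter fun i => lam i = p ^ n).card)
  rw [← (Finset.mem_filter.1 hi).2]
  exact hanti (Fin.mk_le_of_le_val (Nat.zero_le _))
end

section
/- Let p be a prime, F a field of characteristic p, and r, s integers with 1 ≤ r ≤ s ≤ p. Set e = r if r + s ≤ p, and e = p − s if r + s > p. Then the Kronecker product J_r ⊗ J_s is similar over F to the block-diagonal matrix consisting of one block J_{s−r+2i−1} for each 1 ≤ i ≤ e, together with r − e blocks equal to J_p. -/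
/-!
Write `x = (J_r - 1) ⊗ 1` and `y = 1 ⊗ (J_s - 1)`; they commute, `x ^ r = y ^ s = 0`, and
`x ^ (r - 1) * y ^ (s - 1) ≠ 0`. Then `J_r ⊗ J_s = (1 + x) * (1 + y)`, and with the unit `u = 1 + y`
and `z = y * u⁻¹` one has `(1 + x) * (1 + y) - 1 = u * (x + z)`, where again `z ^ s = 0`. Thus
`J_r ⊗ J_s - 1` is, up to a commuting unit, the nilpotent element `x + z`.

The product of `x + z` with each of the `r` elements
`w_m = ∑ j < r - m, (-1) ^ j * x ^ (m + j) * z ^ (s - 1 - j)`, `m < r`, is zero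
(`add_mul_socleElt`), and these elements are linearly independent because multiplication by powers
of `x` moves them triangularly to `x ^ (r - 1) * z ^ (s - 1)` (`linearIndependent_socleElt`).
A family of chains of lengths `d i` with linearly independent end vectors is linearly independent,
and it is a Jordan basis once the lengths add up to the dimension
(`exists_equiv_jordanBlockDiag`). So it remains to write each `w_m` as `(x + z) ^ (d - 1) * v` with
`d` the prescribed block size:

* for `m ≥ p - s`, `d = p`: in characteristic `p`,
  `(x + z) ^ (p - 1) = ∑ i, (-1) ^ i * x ^ i * z ^ (p - 1 - i)`, so that `v = ± x ^ (s + m - p)`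
  works (`add_pow_mul_eq_socleElt_of_free`);
* for `m < e`, `d = s - r + 2 * m + 1 < p`: the vector `v` is the `sl₂`-primitive vector of degree
  `r - 1 - m`, with coefficients `lowCoeff`; that `(x + z) ^ (d - 1) * v` equals
  `choose (d - 1) m • w_m` is a binomial identity (`lowCoeff_sum`), which follows from the vanishing
  of the `L`-th difference of a polynomial of degree less than `L`. The scalar is invertible
  since `d - 1 < p`.
-/

open Kronecker

namespace JordanKronecker

open Finset

/-! ### Binomial identities -/

lemma alt_sum_poly_eq_zero (P : Polynomial ℤ) (L : ℕ) (hP : P.natDegree < L) :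
    ∑ j ∈ range (L + 1), (-1 : ℤ) ^ j * (L.choose j : ℤ) * P.eval (j : ℤ) = 0 := by
  have h := congrFun (Polynomial.fwdDiff_iter_eq_zero_of_degree_lt hP) 0
  rw [fwdDiff_iter_eq_sum_shift] at h
  have h2 : ∑ j ∈ range (L + 1), (-1 : ℤ) ^ j * (L.choose j : ℤ) * P.eval (j : ℤ)
      = (-1) ^ L * ∑ k ∈ range (L + 1),
        ((-1 : ℤ) ^ (L - k) * L.choose k) • P.eval (0 + k • (1 : ℤ)) := by
    rw [mul_sum]
    refine sum_congr rfl fun k hk => ?_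
    have hk' : k ≤ L := Nat.lt_succ_iff.1 (mem_range.1 hk)
    have : (-1 : ℤ) ^ L * (-1) ^ (L - k) = (-1) ^ k := by
      obtain ⟨d, rfl⟩ := Nat.exists_eq_add_of_le hk'
      rw [Nat.add_sub_cancel_left, pow_add, mul_assoc, ← mul_pow]; simp
    simp only [smul_eq_mul, nsmul_eq_mul, mul_one, zero_add]
    rw [← this]; ring
  rw [h2, h]; simp

lemma alt_sum_choose (m n : ℕ) :
    ∑ j ∈ range (m + 1), (-1 : ℤ) ^ j * (m.choose j : ℤ) * ((m + n - j).choose m : ℤ) = 1 := by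
  have h := congrFun (fwdDiff_iter_choose 0 m) n
  rw [fwdDiff_iter_eq_sum_shift, ← sum_range_reflect] at h
  simp only [Nat.choose_zero_right, Nat.cast_one] at h
  refine Eq.trans (sum_congr rfl fun k hk => ?_) h
  have hk' : k ≤ m := Nat.lt_succ_iff.1 (mem_range.1 hk)
  have e1 : m + 1 - 1 - k = m - k := by omega
  have e2 : m - (m - k) = k := by omega
  have e3 : n + (m - k) = m + n - k := by omega
  simp only [Nat.choose_symm hk', e1, e2, smul_eq_mul, mul_one, e3, add_zero]

/-- Turns `choose (q + j) j * choose (m + q + 1) (L - j)` into `choose L j` times a polynomial in `j` of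
degree `L - 1 - m`, up to factors independent of `j`. -/
lemma choose_mul_descFactorial (m q L j : ℕ) (hL : m + 1 ≤ L) (hj : j ≤ L) :
    q.factorial * L.factorial * ((q + j).choose j * (m + q + 1).choose (L - j))
      = (m + q + 1).factorial * (L.choose j * (q + j).descFactorial (L - 1 - m)) := by
  rcases lt_or_ge (m + q + 1) (L - j) with h | h
  · rw [Nat.choose_eq_zero_of_lt h, Nat.descFactorial_eq_zero_iff_lt.2 (by omega)]; simp
  · have h1 := Nat.add_choose_mul_factorial_mul_factorial q j
    have h2 := Nat.choose_mul_factorial_mul_factorial h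
    have h3 := Nat.choose_mul_factorial_mul_factorial hj
    have h4 := Nat.factorial_mul_descFactorial (show L - 1 - m ≤ q + j by omega)
    have e : q + j - (L - 1 - m) = m + q + 1 - (L - j) := by omega
    rw [e] at h4
    have hpos : 0 < j.factorial * (L - j).factorial * (m + q + 1 - (L - j)).factorial := by
      positivity
    apply Nat.eq_of_mul_eq_mul_right hpos
    calc _ = ((q + j).choose j * q.factorial * j.factorial) *
          ((m + q + 1).choose (L - j) * (L - j).factorial * (m + q + 1 - (L - j)).factorial)
          * L.factorial := by ring
      _ = (L.choose j * j.factorial * (L - j).factorial) *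
          ((m + q + 1 - (L - j)).factorial * (q + j).descFactorial (L - 1 - m))
          * (m + q + 1).factorial := by rw [h1, h2, h3, h4]; ring
      _ = _ := by ring

/-- The coefficient of `x ^ j * y ^ (n - j)` in the `sl₂`-primitive element of degree `n` of
`F[x, y] / (x ^ r, y ^ s)`, up to a common scalar, where `m = r - 1 - n` and `q = s - 1 - n`. -/
def lowCoeff (m n q j : ℕ) : ℤ :=
  (-1) ^ j * ((q + j).choose j : ℤ) * ((m + n - j).choose m : ℤ)

/-- The coefficient of `X ^ l` in `X ^ j * (1 + X) ^ t`. -/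
def shiftChoose (t l j : ℕ) : ℕ := if j ≤ l then t.choose (l - j) else 0

/-- The range of `j` may be changed from `j ≤ n` to `j ≤ l`: the terms with `l < j` vanish by
`shiftChoose`, those with `n < j ≤ m + n` by `lowCoeff`. -/
lemma lowCoeff_sum_eq (m n q t l : ℕ) (hl : l ≤ m + n) :
    ∑ j ∈ range (n + 1), lowCoeff m n q j * (shiftChoose t l j : ℤ)
      = ∑ j ∈ range (l + 1), lowCoeff m n q j * (t.choose (l - j) : ℤ) := by
  have h1 : ∑ j ∈ range (n + 1), lowCoeff m n q j * (shiftChoose t l j : ℤ)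
      = ∑ j ∈ range (n + 1 + l), lowCoeff m n q j * (shiftChoose t l j : ℤ) := by
    refine sum_subset (range_subset_range.2 (by omega)) fun j _ hj => ?_
    rw [mem_range, not_lt] at hj
    by_cases hjl : j ≤ l
    · rcases Nat.eq_zero_or_pos m with rfl | hm
      · omega
      · rw [lowCoeff, Nat.choose_eq_zero_of_lt (show m + n - j < m by omega)]; simp
    · simp [shiftChoose, hjl]
  have h2 : ∑ j ∈ range (l + 1), lowCoeff m n q j * (shiftChoose t l j : ℤ)
      = ∑ j ∈ range (n + 1 + l), lowCoeff m n q j * (shiftChoose t l j : ℤ) := by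
    refine sum_subset (range_subset_range.2 (by omega)) fun j _ hj => ?_
    rw [mem_range, not_lt] at hj
    rw [shiftChoose, if_neg (by omega)]; simp
  rw [h1, ← h2]
  refine sum_congr rfl fun j hj => ?_
  rw [shiftChoose, if_pos (Nat.lt_succ_iff.1 (mem_range.1 hj))]

/-- Up to a nonzero factor the sum is an alternating sum `∑ (-1) ^ j * choose L j * P(j)` with `P` a
polynomial of degree `(L - 1 - m) + m < L`. -/
lemma lowCoeff_sum_zero (m n q L : ℕ) (hL : m + 1 ≤ L) (hL' : L ≤ m + n) :
    ∑ j ∈ range (n + 1), lowCoeff m n q j * (shiftChoose (m + q + 1) L j : ℤ) = 0 := by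
  rw [lowCoeff_sum_eq _ _ _ _ _ hL']
  let P : Polynomial ℤ := (descPochhammer ℤ (L - 1 - m)).comp (Polynomial.X + Polynomial.C (q : ℤ))
    * (descPochhammer ℤ m).comp (-Polynomial.X + Polynomial.C ((m + n : ℕ) : ℤ))
  have hP : P.natDegree < L := by
    have h1 : (Polynomial.X + Polynomial.C (q : ℤ)).natDegree = 1 := Polynomial.natDegree_X_add_C _
    have h2 : (-Polynomial.X + Polynomial.C ((m + n : ℕ) : ℤ)).natDegree = 1 := by
      rw [Polynomial.natDegree_add_C, Polynomial.natDegree_neg, Polynomial.natDegree_X]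
    have := Polynomial.natDegree_mul_le
      (p := (descPochhammer ℤ (L - 1 - m)).comp (Polynomial.X + Polynomial.C (q : ℤ)))
      (q := (descPochhammer ℤ m).comp (-Polynomial.X + Polynomial.C ((m + n : ℕ) : ℤ)))
    rw [Polynomial.natDegree_comp, Polynomial.natDegree_comp, h1, h2, descPochhammer_natDegree,
      descPochhammer_natDegree] at this
    change P.natDegree ≤ _ at this
    omega
  have h := alt_sum_poly_eq_zero P L hP
  have hne : ((q.factorial * L.factorial * m.factorial : ℕ) : ℤ) ≠ 0 := by
    have : 0 < q.factorial * L.factorial * m.factorial := by positivity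
    exact_mod_cast this.ne'
  refine (mul_eq_zero.1 (?_ : ((q.factorial * L.factorial * m.factorial : ℕ) : ℤ) * _
    = 0)).resolve_left hne
  rw [← mul_zero ((m + q + 1).factorial : ℤ), ← h, mul_sum, mul_sum]
  refine sum_congr rfl fun j hj => ?_
  have hj' : j ≤ L := Nat.lt_succ_iff.1 (mem_range.1 hj)
  have e1 : P.eval (j : ℤ) = ((q + j).descFactorial (L - 1 - m) : ℤ) *
      ((m.factorial : ℤ) * ((m + n - j).choose m : ℤ)) := by
    have a1 : (j : ℤ) + q = ((q + j : ℕ) : ℤ) := by push_cast; ring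
    have a2 : -(j : ℤ) + ((m + n : ℕ) : ℤ) = ((m + n - j : ℕ) : ℤ) := by omega
    simp only [P, Polynomial.eval_mul, Polynomial.eval_comp, Polynomial.eval_add,
      Polynomial.eval_X, Polynomial.eval_C, Polynomial.eval_neg]
    rw [a1, a2, descPochhammer_eval_eq_descFactorial, descPochhammer_eval_eq_descFactorial,
      Nat.descFactorial_eq_factorial_mul_choose (m + n - j) m]
    push_cast; rfl
  have e2 : ((q.factorial : ℤ) * L.factorial * (((q + j).choose j : ℤ) *
        ((m + q + 1).choose (L - j) : ℤ)))
      = ((m + q + 1).factorial : ℤ) * ((L.choose j : ℤ) *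
        ((q + j).descFactorial (L - 1 - m) : ℤ)) := by
    exact_mod_cast choose_mul_descFactorial m q L j hL hj'
  rw [e1, lowCoeff]
  push_cast
  linear_combination ((-1 : ℤ) ^ j * (m.factorial : ℤ) * ((m + n - j).choose m : ℤ)) * e2

/-- The coefficients of degrees `m, …, m + n` of `(1 + X) ^ (m + q) * ∑ j, lowCoeff m n q j * X ^ j`
alternate in sign and have equal absolute value. Consecutive ones add up to a coefficient for the
exponent `m + q + 1`, which is zero by `lowCoeff_sum_zero`. -/
lemma lowCoeff_sum (m n q i : ℕ) (hi : i ≤ n) :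
    ∑ j ∈ range (n + 1), lowCoeff m n q j * (shiftChoose (m + q) (m + i) j : ℤ)
      = (-1) ^ i * ((m + q).choose m : ℤ) := by
  induction i with
  | zero =>
    rw [lowCoeff_sum_eq _ _ _ _ _ (by omega), add_zero, pow_zero, one_mul,
      ← mul_one ((m + q).choose m : ℤ), ← alt_sum_choose m n, mul_sum]
    refine sum_congr rfl fun j hj => ?_
    have hj' : j ≤ m := Nat.lt_succ_iff.1 (mem_range.1 hj)
    have : (q + j).choose j * (m + q).choose (m - j) = (m + q).choose m * m.choose j := by
      rw [Nat.choose_mul (n := m + q) hj',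
        ← Nat.choose_symm_of_eq_add (show m + q = (q + j) + (m - j) by omega), mul_comm,
        Nat.choose_mul (n := m + q) (show j ≤ q + j by omega),
        Nat.choose_symm_of_eq_add (show m + q - j = (q + j - j) + (m - j) by omega)]
    rw [lowCoeff]
    have h2 : (((q + j).choose j : ℤ) * ((m + q).choose (m - j) : ℤ))
        = ((m + q).choose m : ℤ) * (m.choose j : ℤ) := by
      exact_mod_cast this
    linear_combination (-1 : ℤ) ^ j * ((m + n - j).choose m : ℤ) * h2
  | succ i ih =>
    have h0 := lowCoeff_sum_zero m n q (m + i + 1) (by omega) (by omega)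
    have hp : ∀ j, (shiftChoose (m + q + 1) (m + i + 1) j : ℤ)
        = shiftChoose (m + q) (m + i) j + shiftChoose (m + q) (m + (i + 1)) j := by
      intro j
      rcases lt_trichotomy j (m + i + 1) with h | rfl | h
      · rw [shiftChoose, shiftChoose, shiftChoose, if_pos (by omega), if_pos (by omega),
          if_pos (by omega), show m + i + 1 - j = m + i - j + 1 by omega,
          show m + (i + 1) - j = m + i - j + 1 by omega, Nat.choose_succ_succ]
        push_cast; rfl
      · simp [shiftChoose, add_assoc]
      · rw [shiftChoose, shiftChoose, shiftChoose, if_neg (by omega), if_neg (by omega),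
          if_neg (by omega)]; simp
    simp only [hp, mul_add, sum_add_distrib] at h0
    rw [ih (by omega)] at h0
    rw [pow_succ]
    linear_combination h0

/-! ### The elements annihilated by `x + y` -/

/-- The homogeneous element `∑ j < r - m, (-1) ^ j x ^ (m + j) y ^ (s - 1 - j)` of degree `s - 1 + m`
in `x` and `y`; it is killed by `x + y` as soon as `x ^ r = y ^ s = 0` and `m < r ≤ s`. -/
def socleElt {A : Type*} [CommRing A] (x y : A) (r s m : ℕ) : A :=
  ∑ j ∈ range (r - m), (-1) ^ j * (x ^ (m + j) * y ^ (s - 1 - j))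

lemma add_mul_socleElt {A : Type*} [CommRing A] (x y : A) (r s m : ℕ) (hx : x ^ r = 0)
    (hy : y ^ s = 0) (hrs : r ≤ s) (hm : m < r) : (x + y) * socleElt x y r s m = 0 := by
  have key : (x + y) * socleElt x y r s m
      = ∑ j ∈ range (r - m), ((-1) ^ j * (x ^ (m + j) * y ^ (s - j))
          - (-1) ^ (j + 1) * (x ^ (m + (j + 1)) * y ^ (s - (j + 1)))) := by
    rw [socleElt, mul_sum]
    refine sum_congr rfl fun j hj => ?_
    have hj' := mem_range.1 hj
    rw [show s - j = s - 1 - j + 1 by omega, show s - (j + 1) = s - 1 - j by omega]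
    ring
  rw [key, sum_range_sub', show m + (r - m) = r by omega, hx]
  simp [hy]

lemma mul_socleElt_self {A : Type*} [CommRing A] (x y : A) (r s m : ℕ) (hx : x ^ r = 0)
    (hm : m < r) : x ^ (r - 1 - m) * socleElt x y r s m = x ^ (r - 1) * y ^ (s - 1) := by
  rw [socleElt, show r - m = (r - m - 1) + 1 by omega, sum_range_succ', mul_add, mul_sum,
    sum_eq_zero]
  · simp only [pow_zero, one_mul, add_zero, Nat.sub_zero, zero_add]
    rw [← mul_assoc, ← pow_add, show r - 1 - m + m = r - 1 by omega]
  · intro j _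
    have : x ^ (r - 1 - m) * x ^ (m + (j + 1)) = 0 := by
      rw [← pow_add, show r - 1 - m + (m + (j + 1)) = r + j by omega, pow_add, hx, zero_mul]
    linear_combination (-1) ^ (j + 1) * y ^ (s - 1 - (j + 1)) * this

lemma mul_socleElt_of_lt {A : Type*} [CommRing A] (x y : A) (r s k m : ℕ) (hx : x ^ r = 0)
    (hkm : k < m) (hm : m < r) : x ^ (r - 1 - k) * socleElt x y r s m = 0 := by
  rw [socleElt, mul_sum, sum_eq_zero]
  intro j _
  have : x ^ (r - 1 - k) * x ^ (m + j) = 0 := by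
    rw [← pow_add, show r - 1 - k + (m + j) = r + (m + j - k - 1) by omega, pow_add, hx, zero_mul]
  linear_combination (-1) ^ j * y ^ (s - 1 - j) * this

/-! ### Preimages under powers of `x + y` -/

lemma choose_prime_sub_one {A : Type*} [CommRing A] (p : ℕ) (hp : p.Prime) (hpA : (p : A) = 0)
    (i : ℕ) (hi : i < p) : (((p - 1).choose i : ℕ) : A) = (-1) ^ i := by
  induction i with
  | zero => simp
  | succ i ih =>
    have h1 : p.choose (i + 1) = (p - 1).choose i + (p - 1).choose (i + 1) := by
      obtain ⟨k, rfl⟩ := Nat.exists_eq_add_of_le' hp.one_le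
      rw [Nat.choose_succ_succ]; rfl
    have h2 : ((p.choose (i + 1) : ℕ) : A) = 0 := by
      obtain ⟨c, hc⟩ := hp.dvd_choose_self (Nat.succ_ne_zero i) hi
      rw [hc, Nat.cast_mul, hpA, zero_mul]
    rw [h1, Nat.cast_add, ih (by omega)] at h2
    rw [pow_succ]
    linear_combination h2

/-- The elements `socleElt` of degree at least `p - 1` lie in the image of `(x + y) ^ (p - 1)`. -/
lemma add_pow_mul_eq_socleElt_of_free {A : Type*} [CommRing A] (p : ℕ) (hp : p.Prime)
    (hpA : (p : A) = 0) (x y : A) (r s m : ℕ) (hx : x ^ r = 0) (hy : y ^ s = 0) (hrs : r ≤ s)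
    (hsp : s ≤ p) (hm : m < r) (hpm : p ≤ s + m) :
    (x + y) ^ (p - 1) * ((-1) ^ (p - s) * x ^ (s + m - p)) = socleElt x y r s m := by
  have h1 : (x + y) ^ (p - 1) = ∑ i ∈ range p, (-1) ^ i * (x ^ i * y ^ (p - 1 - i)) := by
    rw [add_pow, show p - 1 + 1 = p by have := hp.one_le; omega]
    refine sum_congr rfl fun i hi => ?_
    rw [choose_prime_sub_one p hp hpA i (mem_range.1 hi)]; ring
  -- Only the middle `r - m` terms survive: `y ^ s = 0` kills the first ones, `x ^ r = 0` the last ones.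
  have hp' : p = (p - s) + ((r - m) + (s - (r - m))) := by omega
  have h2 : range p = range ((p - s) + ((r - m) + (s - (r - m)))) := by rw [← hp']
  rw [h1, h2, sum_range_add, sum_range_add, add_mul, add_mul]
  have z1 : ∑ i ∈ range (p - s), (-1) ^ i * (x ^ i * y ^ (p - 1 - i)) = 0 := by
    refine sum_eq_zero fun i hi => ?_
    have := mem_range.1 hi
    rw [show p - 1 - i = s + (p - 1 - i - s) by omega, pow_add, hy]; ring
  rw [z1, zero_mul, zero_add, sum_mul, sum_mul, socleElt]
  have z2 : ∑ i ∈ range (s - (r - m)), (-1) ^ (p - s + (r - m + i)) *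
      (x ^ (p - s + (r - m + i)) * y ^ (p - 1 - (p - s + (r - m + i)))) *
        ((-1) ^ (p - s) * x ^ (s + m - p)) = 0 := by
    refine sum_eq_zero fun i hi => ?_
    have : x ^ (p - s + (r - m + i)) * x ^ (s + m - p) = 0 := by
      rw [← pow_add, show p - s + (r - m + i) + (s + m - p) = r + i by omega, pow_add, hx,
        zero_mul]
    linear_combination (-1) ^ (p - s + (r - m + i)) * y ^ (p - 1 - (p - s + (r - m + i))) *
      (-1) ^ (p - s) * this
  rw [z2, add_zero]
  refine sum_congr rfl fun j hj => ?_
  have hj' := mem_range.1 hj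
  have e1 : x ^ (p - s + j) * x ^ (s + m - p) = x ^ (m + j) := by
    rw [← pow_add]; congr 1; omega
  have e2 : ((-1 : A)) ^ (p - s + j) * (-1) ^ (p - s) = (-1) ^ j := by
    rw [pow_add, mul_right_comm, ← mul_pow]; simp
  rw [show p - 1 - (p - s + j) = s - 1 - j by omega, ← e1, ← e2]
  ring

lemma add_pow_mul_sum {A : Type*} [CommRing A] (x y : A) (t n : ℕ) (a : ℕ → A) :
    (x + y) ^ t * ∑ j ∈ range (n + 1), a j * (x ^ j * y ^ (n - j))
      = ∑ l ∈ range (t + n + 1), (∑ j ∈ range (n + 1), a j * (shiftChoose t l j : A)) *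
          (x ^ l * y ^ (t + n - l)) := by
  simp only [sum_mul]
  rw [sum_comm, mul_sum]
  refine sum_congr rfl fun j hj => ?_
  have hj' : j ≤ n := Nat.lt_succ_iff.1 (mem_range.1 hj)
  have h2 : range (t + n + 1) = range (j + ((t + 1) + (n - j))) := by congr 1; omega
  rw [h2, sum_range_add, sum_range_add]
  have z1 : ∑ l ∈ range j, a j * (shiftChoose t l j : A) * (x ^ l * y ^ (t + n - l)) = 0 := by
    refine sum_eq_zero fun l hl => ?_
    have := mem_range.1 hl
    rw [shiftChoose, if_neg (by omega)]; simp
  have z2 : ∑ i ∈ range (n - j), a j * (shiftChoose t (j + (t + 1 + i)) j : A) *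
      (x ^ (j + (t + 1 + i)) * y ^ (t + n - (j + (t + 1 + i)))) = 0 := by
    refine sum_eq_zero fun i hi => ?_
    rw [shiftChoose, if_pos (by omega), Nat.choose_eq_zero_of_lt (by omega)]; simp
  rw [z1, z2, zero_add, add_zero, add_pow, sum_mul]
  refine sum_congr rfl fun i hi => ?_
  have hi' : i ≤ t := Nat.lt_succ_iff.1 (mem_range.1 hi)
  rw [shiftChoose, if_pos (by omega), Nat.add_sub_cancel_left,
    show t + n - (j + i) = (t - i) + (n - j) by omega, pow_add, pow_add]
  ring

/-- A form of the hard Lefschetz property in characteristic `p`: the element `socleElt` of degree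
`s - 1 + m` is the image under `(x + y) ^ (s - r + 2 * m)` of an element of the complementary degree
`r - 1 - m`, as long as the exponent is less than `p`. -/
lemma exists_add_pow_mul_eq_socleElt {F A : Type*} [Field F] [CommRing A] [Algebra F A] (p : ℕ)
    (hp : p.Prime) [CharP F p] (x y : A) (r s m : ℕ) (hx : x ^ r = 0) (hy : y ^ s = 0)
    (hrs : r ≤ s) (hm : m < r) (ht : s - r + 2 * m < p) :
    ∃ v, (x + y) ^ (s - r + 2 * m) * v = socleElt x y r s m := by
  obtain ⟨q, hq⟩ : ∃ q, q = s - r + m := ⟨_, rfl⟩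
  obtain ⟨n, hn⟩ : ∃ n, n = r - 1 - m := ⟨_, rfl⟩
  have ht' : s - r + 2 * m = m + q := by omega
  rw [ht'] at ht ⊢
  have hc : (((m + q).choose m : ℕ) : F) ≠ 0 := by
    rw [Ne, CharP.cast_eq_zero_iff F p]
    intro h
    have h2 : p ∣ (m + q).factorial := by
      rw [← Nat.choose_mul_factorial_mul_factorial (show m ≤ m + q by omega), mul_assoc]
      exact h.mul_right _
    exact absurd ((hp.dvd_factorial).1 h2) (by omega)
  have key : (x + y) ^ (m + q) *
      ∑ j ∈ range (n + 1), ((lowCoeff m n q j : ℤ) : A) * (x ^ j * y ^ (n - j))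
      = (((m + q).choose m : ℕ) : A) * socleElt x y r s m := by
    rw [add_pow_mul_sum]
    have h2 : range (m + q + n + 1) = range (m + ((r - m) + (m + q - m))) := by congr 1; omega
    rw [h2, sum_range_add, sum_range_add, socleElt, mul_sum]
    have z1 : ∑ l ∈ range m, (∑ j ∈ range (n + 1), ((lowCoeff m n q j : ℤ) : A) *
        (shiftChoose (m + q) l j : A)) * (x ^ l * y ^ (m + q + n - l)) = 0 := by
      refine sum_eq_zero fun l hl => ?_
      have := mem_range.1 hl
      rw [show m + q + n - l = s + (m - 1 - l) by omega, pow_add, hy]; simp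
    have z2 : ∑ i ∈ range (m + q - m), (∑ j ∈ range (n + 1), ((lowCoeff m n q j : ℤ) : A) *
        (shiftChoose (m + q) (m + (r - m + i)) j : A)) *
          (x ^ (m + (r - m + i)) * y ^ (m + q + n - (m + (r - m + i)))) = 0 := by
      refine sum_eq_zero fun i hi => ?_
      rw [show m + (r - m + i) = r + i by omega, pow_add x, hx]; simp
    rw [z1, z2, zero_add, add_zero]
    refine sum_congr rfl fun i hi => ?_
    have hi' := mem_range.1 hi
    have h3 := congrArg (Int.cast : ℤ → A) (lowCoeff_sum m n q i (by omega))
    push_cast at h3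
    rw [h3, show m + q + n - (m + i) = s - 1 - i by omega]
    ring
  refine ⟨(((m + q).choose m : ℕ) : F)⁻¹ • ∑ j ∈ range (n + 1),
    ((lowCoeff m n q j : ℤ) : A) * (x ^ j * y ^ (n - j)), ?_⟩
  rw [mul_smul_comm, key, ← map_natCast (algebraMap F A), ← Algebra.smul_def, smul_smul,
    inv_mul_cancel₀ hc, one_smul]

/-! ### Jordan bases from chains -/

/-- Chains `v i, M (v i), …, M ^ (d i - 1) (v i)` are jointly linearly independent if their end vectors
are. The chains are indexed from the end vector upwards, which matches the superdiagonal convention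
for Jordan blocks. -/
lemma linearIndependent_chains {F V ι : Type*} [Field F] [AddCommGroup V] [Module F V]
    [Fintype ι] (M : Module.End F V) (d : ι → ℕ) (v : ι → V)
    (h0 : ∀ i, (M ^ d i) (v i) = 0)
    (hli : LinearIndependent F fun i => (M ^ (d i - 1)) (v i)) :
    LinearIndependent F fun a : (i : ι) × Fin (d i) => (M ^ (d a.1 - 1 - a.2)) (v a.1) := by
  classical
  rw [Fintype.linearIndependent_iff] at hli ⊢
  intro g hg
  by_contra! hne
  obtain ⟨a₀, ha₀⟩ := hne
  -- Among the nonzero coefficients, one as far as possible from the end of its chain: applying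
  -- `M ^ b.2` leaves only the end vectors of the chains.
  obtain ⟨b, hb, hmax⟩ := exists_max_image (univ.filter fun a => g a ≠ 0)
    (fun a => (a.2 : ℕ)) ⟨a₀, by simp [ha₀]⟩
  simp only [mem_filter, mem_univ, true_and] at hb hmax
  have h1 := congrArg (M ^ (b.2 : ℕ)) hg
  rw [map_sum, map_zero] at h1
  let c : ι → F := fun i => if h : (b.2 : ℕ) < d i then g ⟨i, ⟨b.2, h⟩⟩ else 0
  have h2 : ∑ i, c i • (M ^ (d i - 1)) (v i) = 0 := by
    rw [← h1, Fintype.sum_sigma]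
    refine sum_congr rfl fun i _ => ?_
    have hterm : ∀ k : Fin (d i), (k : ℕ) ≠ b.2 →
        (M ^ (b.2 : ℕ)) (g ⟨i, k⟩ • (M ^ (d i - 1 - k)) (v i)) = 0 := by
      intro k hk
      rcases lt_or_gt_of_ne hk with hlt | hgt
      · have hkd := k.2
        rw [map_smul, ← Module.End.mul_apply, ← pow_add,
          show (b.2 : ℕ) + (d i - 1 - k) = (b.2 - 1 - k) + d i by omega, pow_add,
          Module.End.mul_apply, h0, map_zero, smul_zero]
      · have : g ⟨i, k⟩ = 0 := by
          by_contra hgk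
          exact absurd (hmax _ hgk) (by simpa using hgt)
        rw [this, zero_smul, map_zero]
    by_cases h : (b.2 : ℕ) < d i
    · rw [sum_eq_single (⟨b.2, h⟩ : Fin (d i))]
      · simp only [c, dif_pos h]
        rw [map_smul, ← Module.End.mul_apply, ← pow_add,
          show (b.2 : ℕ) + (d i - 1 - b.2) = d i - 1 by omega]
      · intro k _ hk
        exact hterm k fun h' => hk (Fin.ext h')
      · simp
    · simp only [c, dif_neg h, zero_smul]
      exact (sum_eq_zero fun k _ => hterm k (by have := k.2; omega)).symm
  have h3 := hli c h2 b.1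
  simp only [c, dif_pos b.2.2] at h3
  exact hb h3

/-- Chains for `T - 1` of lengths `d i` with linearly independent end vectors, and of total length the
dimension, bring `T` to the block-diagonal form with blocks `J_{d i}`. -/
lemma exists_equiv_jordanBlockDiag {F V : Type*} {ι : Type} [Field F] [AddCommGroup V] [Module F V]
    [FiniteDimensional F V] [Fintype ι] [DecidableEq ι] (T : Module.End F V) (d : ι → ℕ)
    (v : ι → V) (h0 : ∀ i, ((T - 1) ^ d i) (v i) = 0)
    (hli : LinearIndependent F fun i => ((T - 1) ^ (d i - 1)) (v i))
    (hd : ∑ i, d i = Module.finrank F V) :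
    ∃ e : V ≃ₗ[F] (((i : ι) × Fin (d i)) → F),
      ∀ u, e (T u) = (jordanBlockDiag F d).mulVec (e u) := by
  classical
  have hli' := linearIndependent_chains (T - 1) d v h0 hli
  let b : Module.Basis ((i : ι) × Fin (d i)) F V :=
    basisOfLinearIndependentOfCardEqFinrank' _ hli' (by simp [hd])
  have hb : ∀ a, b a = ((T - 1) ^ (d a.1 - 1 - a.2)) (v a.1) := fun a => by simp [b]
  refine ⟨b.equivFun, fun u => ?_⟩
  suffices h : b.equivFun.toLinearMap ∘ₗ T
      = (jordanBlockDiag F d).mulVecLin ∘ₗ b.equivFun.toLinearMap from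
    LinearMap.congr_fun h u
  refine b.ext fun a => ?_
  have hT : T (b a) = b a + (T - 1) (b a) := by simp
  obtain ⟨i, k⟩ := a
  simp only [LinearMap.comp_apply, LinearEquiv.coe_coe, Matrix.mulVecLin_apply]
  rw [hT, map_add]
  have hM : (T - 1) (b ⟨i, k⟩) = if h : (k : ℕ) = 0 then 0 else b ⟨i, ⟨k - 1, by omega⟩⟩ := by
    rw [hb, ← Module.End.mul_apply, ← pow_succ']
    have hk := k.2
    split_ifs with h
    · rw [show d i - 1 - (k : ℕ) + 1 = d i by omega]; exact h0 i
    · rw [hb]; simp only; congr 2; omega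
  have hself : ∀ a, b.equivFun (b a) = Pi.single a 1 := fun a => by
    ext c; simp [Pi.single_apply, eq_comm]
  have hs : ∀ i (k : Fin (d i)) i' (k' : Fin (d i')),
      (Pi.single (⟨i, k⟩ : (i : ι) × Fin (d i)) (1 : F) : _ → F) ⟨i', k'⟩
        = if i' = i ∧ (k' : ℕ) = k then 1 else 0 := by
    intro i k i' k'
    by_cases hi : i' = i
    · subst hi; simp [Pi.single_apply, Fin.ext_iff]
    · rw [Pi.single_apply, if_neg fun h => hi (congrArg Sigma.fst h), if_neg fun h => hi h.1]
  rw [hM]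
  ext ⟨i', k'⟩
  rw [hself, Matrix.mulVec_single_one, Matrix.col_apply, jordanBlockDiag, Pi.add_apply, hs]
  have hk := k.2
  have hent : b.equivFun (if h : (k : ℕ) = 0 then 0 else b ⟨i, ⟨k - 1, by omega⟩⟩) ⟨i', k'⟩
      = if i' = i ∧ (k : ℕ) = k' + 1 then 1 else 0 := by
    by_cases h : (k : ℕ) = 0
    · rw [dif_pos h, map_zero, Pi.zero_apply, if_neg (by omega)]
    · rw [dif_neg h, hself, hs]
      exact if_congr (and_congr_right fun _ => by simp only; omega) rfl rfl
  rw [hent]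
  by_cases hi : i' = i
  · subst hi
    rw [Matrix.blockDiagonal'_apply_eq, jordanBlock, Matrix.of_apply]
    simp only [true_and]
    split_ifs <;> first | omega | simp
  · rw [Matrix.blockDiagonal'_apply_ne _ _ _ hi]
    simp [hi]

/-! ### Decomposition for a pair of commuting nilpotent elements -/

lemma linearIndependent_socleElt {F A V : Type*} [Field F] [CommRing A] [Algebra F A]
    [AddCommGroup V] [Module F V] (φ : A →ₐ[F] Module.End F V) (x y : A) (u₀ : V) (r s : ℕ)
    (hx : x ^ r = 0) (h : φ (x ^ (r - 1) * y ^ (s - 1)) u₀ ≠ 0) :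
    LinearIndependent F fun m : Fin r => φ (socleElt x y r s m) u₀ := by
  classical
  rw [Fintype.linearIndependent_iff]
  intro g hg
  by_contra! hne
  obtain ⟨a₀, ha₀⟩ := hne
  -- For the least index `b` with nonzero coefficient, `x ^ (r - 1 - b)` kills all terms but the `b`-th.
  obtain ⟨b, hb, hmin⟩ := exists_min_image (univ.filter fun a => g a ≠ 0) id ⟨a₀, by simp [ha₀]⟩
  simp only [mem_filter, mem_univ, true_and, id] at hb hmin
  have h1 := congrArg (φ (x ^ (r - 1 - (b : ℕ)))) hg
  rw [map_sum, map_zero, sum_eq_single b] at h1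
  · rw [map_smul, ← Module.End.mul_apply, ← map_mul, mul_socleElt_self x y r s b hx b.2] at h1
    exact (smul_ne_zero hb h) h1
  · intro k _ hk
    by_cases hgk : g k = 0
    · rw [hgk, zero_smul, map_zero]
    · have hlt : (b : ℕ) < k := lt_of_le_of_ne (hmin k hgk) fun h' => hk (Fin.ext h'.symm)
      rw [map_smul, ← Module.End.mul_apply, ← map_mul,
        mul_socleElt_of_lt x y r s b k hx hlt k.2, map_zero, LinearMap.zero_apply, smul_zero]
  · simp

lemma sum_block_sizes (p r s e : ℕ) (hrs : r ≤ s) (hsp : s ≤ p)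
    (he : e = if r + s ≤ p then r else p - s) :
    ∑ a : Fin e ⊕ Fin (r - e), Sum.elim (fun i : Fin e => s - r + 2 * (i : ℕ) + 1)
        (fun _ : Fin (r - e) => p) a = r * s := by
  have h : ∀ c n : ℕ, ∑ i ∈ range n, (c + 2 * i + 1) = n * c + n * n := by
    intro c n
    induction n with
    | zero => simp
    | succ n ih => rw [sum_range_succ, ih]; ring
  rw [Fintype.sum_sum_type]
  simp only [Sum.elim_inl, Sum.elim_inr, sum_const, card_univ, Fintype.card_fin, smul_eq_mul]
  rw [Fin.sum_univ_eq_sum_range (fun i => s - r + 2 * i + 1) e, h]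
  split_ifs at he with hc
  · subst he
    obtain ⟨k, rfl⟩ := Nat.exists_eq_add_of_le hrs
    rw [Nat.add_sub_cancel_left, Nat.sub_self]; ring
  · obtain ⟨k, rfl⟩ := Nat.exists_eq_add_of_le hrs
    have her : e ≤ r := by omega
    obtain ⟨f, rfl⟩ := Nat.exists_eq_add_of_le her
    have hp : p = e + f + k + e := by omega
    rw [Nat.add_sub_cancel_left, Nat.add_sub_cancel_left, hp]; ring

/-- The decomposition for `(1 + x) * (1 + y)` acting on a space of dimension `r * s`, where `x` and `y`
are nilpotent elements of a commutative algebra. -/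
lemma exists_equiv_of_commuting {F A V : Type*} [Field F] [CommRing A] [Algebra F A]
    [AddCommGroup V] [Module F V] [FiniteDimensional F V] (φ : A →ₐ[F] Module.End F V)
    (x y : A) (u₀ : V) (p : ℕ) (hp : p.Prime) [CharP F p] (r s : ℕ) (hrs : r ≤ s) (hsp : s ≤ p)
    (e : ℕ) (he : e = if r + s ≤ p then r else p - s) (hx : x ^ r = 0) (hy : y ^ s = 0)
    (h : φ (x ^ (r - 1) * y ^ (s - 1)) u₀ ≠ 0) (hV : Module.finrank F V = r * s) :
    ∃ E : V ≃ₗ[F] (((a : Fin e ⊕ Fin (r - e)) × Fin (Sum.elim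
        (fun i : Fin e => s - r + 2 * (i : ℕ) + 1) (fun _ : Fin (r - e) => p) a)) → F),
      ∀ v, E (φ ((1 + x) * (1 + y)) v) = (jordanBlockDiag F (Sum.elim
        (fun i : Fin e => s - r + 2 * (i : ℕ) + 1) (fun _ : Fin (r - e) => p))).mulVec (E v) := by
  set d : Fin e ⊕ Fin (r - e) → ℕ := Sum.elim
    (fun i : Fin e => s - r + 2 * (i : ℕ) + 1) (fun _ : Fin (r - e) => p) with hd
  have her : e ≤ r := by split_ifs at he <;> omega
  have hpA : (p : A) = 0 := by
    rw [← map_natCast (algebraMap F A), CharP.cast_eq_zero, map_zero]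
  obtain ⟨u, hu⟩ : IsUnit (1 + y) := IsNilpotent.isUnit_one_add ⟨s, hy⟩
  obtain ⟨z, hz⟩ : ∃ z, z = y * ((u⁻¹ : Aˣ) : A) := ⟨_, rfl⟩
  have hzu : y = z * u := by rw [hz, mul_assoc, Units.inv_mul, mul_one]
  have hzs : z ^ s = 0 := by rw [hz, mul_pow, hy, zero_mul]
  have hT : φ ((1 + x) * (1 + y)) - 1 = φ (u * (x + z)) := by
    rw [← map_one φ, ← map_sub]
    congr 1
    linear_combination (1 : A) * hzu - x * hu
  have hd1 : ∀ a, 1 ≤ d a := by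
    rintro (i | i)
    · simp [hd]
    · simpa [hd] using hp.one_le
  -- The block `a` of the decomposition ends in `socleElt x z r s (μ a)`.
  let μ : Fin e ⊕ Fin (r - e) → Fin r := Sum.elim (fun i => ⟨i, by omega⟩)
    (fun i => ⟨e + i, by omega⟩)
  have hμ : Function.Injective μ := by
    rintro (i | i) (j | j) hij <;> simp [μ, Fin.ext_iff] at hij ⊢ <;> omega
  have hex : ∀ a, ∃ c, (x + z) ^ (d a - 1) * c = socleElt x z r s (μ a) := by
    rintro (i | i)
    · have hi := i.2
      have := exists_add_pow_mul_eq_socleElt (F := F) p hp x z r s i hx hzs hrs (by omega)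
        (by split_ifs at he <;> omega)
      simpa [hd, μ] using this
    · have hi := i.2
      exact ⟨_, add_pow_mul_eq_socleElt_of_free p hp hpA x z r s (e + i) hx hzs hrs hsp (by omega)
        (by split_ifs at he <;> omega)⟩
  choose c hc using hex
  have hsoc : ∀ a, ((φ ((1 + x) * (1 + y)) - 1) ^ (d a - 1))
      (φ (((u⁻¹ : Aˣ) : A) ^ (d a - 1) * c a) u₀) = φ (socleElt x z r s (μ a)) u₀ := by
    intro a
    rw [hT, ← map_pow, ← Module.End.mul_apply, ← map_mul, ← hc a]
    have : (u : A) ^ (d a - 1) * ((u⁻¹ : Aˣ) : A) ^ (d a - 1) = 1 := by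
      rw [← mul_pow, Units.mul_inv, one_pow]
    congr 2
    rw [mul_pow]
    linear_combination (x + z) ^ (d a - 1) * c a * this
  -- The power of `u⁻¹` compensates the unit in `u * (x + z)`, so the chain ends exactly in `socleElt`.
  refine exists_equiv_jordanBlockDiag (φ ((1 + x) * (1 + y))) d
    (fun a => φ (((u⁻¹ : Aˣ) : A) ^ (d a - 1) * c a) u₀) ?_ ?_ ?_
  · intro a
    have : d a = (d a - 1) + 1 := by have := hd1 a; omega
    conv_lhs => rw [this, pow_succ', Module.End.mul_apply]
    rw [← this, hsoc a, hT, ← Module.End.mul_apply, ← map_mul, mul_assoc,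
      add_mul_socleElt x z r s (μ a) hx hzs hrs (μ a).2]
    simp
  · simp only [hsoc]
    refine (linearIndependent_socleElt φ x z u₀ r s hx fun h0 => h ?_).comp μ hμ
    have : x ^ (r - 1) * y ^ (s - 1) = (u : A) ^ (s - 1) * (x ^ (r - 1) * z ^ (s - 1)) := by
      rw [hzu, mul_pow]; ring
    rw [this, map_mul, Module.End.mul_apply, h0, map_zero]
  · rw [hV, hd]
    exact sum_block_sizes p r s e hrs hsp he

/-! ### Powers of the nilpotent matrices -/

lemma jordanBlock_sub_one_pow_apply (F : Type*) [Field F] (m k : ℕ) (i j : Fin m) :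
    ((jordanBlock F m - 1) ^ k) i j = if (j : ℕ) = i + k then 1 else 0 := by
  induction k generalizing i with
  | zero => simp [Matrix.one_apply, Fin.ext_iff, eq_comm]
  | succ k ih =>
    have h1 : ∀ l : Fin m, (jordanBlock F m - 1) i l = if (l : ℕ) = i + 1 then 1 else 0 := by
      intro l
      rw [Matrix.sub_apply, jordanBlock, Matrix.of_apply, Matrix.one_apply]
      simp only [Fin.ext_iff]
      split_ifs <;> first | omega | simp
    rw [pow_succ', Matrix.mul_apply]
    simp only [h1, ih, ite_mul, one_mul, zero_mul]
    by_cases hi : (i : ℕ) + 1 < m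
    · rw [sum_eq_single (⟨i + 1, hi⟩ : Fin m)]
      · simp [add_assoc, add_comm 1 k]
      · intro l _ hl
        rw [if_neg fun h => hl (Fin.ext h)]
      · simp
    · have hj := j.2
      rw [if_neg (by omega)]
      refine sum_eq_zero fun l _ => ?_
      have hl := l.2
      rw [if_neg (by omega)]

lemma jordanBlock_sub_one_pow_self (F : Type*) [Field F] (m : ℕ) :
    (jordanBlock F m - 1) ^ m = 0 := by
  ext i j
  have hj := j.2
  rw [jordanBlock_sub_one_pow_apply, if_neg (by omega), Matrix.zero_apply]

lemma kronecker_pow_pow {F : Type*} [Field F] {r s : ℕ} (M : Matrix (Fin r) (Fin r) F)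
    (N : Matrix (Fin s) (Fin s) F) (a b : ℕ) :
    (M ⊗ₖ (1 : Matrix (Fin s) (Fin s) F)) ^ a * ((1 : Matrix (Fin r) (Fin r) F) ⊗ₖ N) ^ b
      = (M ^ a) ⊗ₖ (N ^ b) := by
  have h1 : ∀ a : ℕ, (M ⊗ₖ (1 : Matrix (Fin s) (Fin s) F)) ^ a = (M ^ a) ⊗ₖ 1 := by
    intro a
    induction a with
    | zero => simp
    | succ a ih => rw [pow_succ, ih, ← Matrix.mul_kronecker_mul, pow_succ, mul_one]
  have h2 : ∀ b : ℕ, ((1 : Matrix (Fin r) (Fin r) F) ⊗ₖ N) ^ b = 1 ⊗ₖ (N ^ b) := by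
    intro b
    induction b with
    | zero => simp
    | succ b ih => rw [pow_succ, ih, ← Matrix.mul_kronecker_mul, pow_succ, mul_one]
  rw [h1, h2, ← Matrix.mul_kronecker_mul, mul_one, one_mul]

end JordanKronecker

/-- Renaud's base case: for `1 ≤ r ≤ s ≤ p`, `J_r ⊗ J_s` decomposes into the blocks
`J_{s−r+2i−1}` for `1 ≤ i ≤ e`, together with `r − e` blocks `J_p`. -/
theorem stmt_7 {F : Type*} [Field F] (p : ℕ) (hp : p.Prime) [CharP F p]
    (r s : ℕ) (hr : 1 ≤ r) (hrs : r ≤ s) (hsp : s ≤ p)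
    (e : ℕ) (he : e = if r + s ≤ p then r else p - s) :
    MatSimilar F (jordanBlock F r ⊗ₖ jordanBlock F s)
      (jordanBlockDiag F (Sum.elim
        (fun i : Fin e => s - r + 2 * (i : ℕ) + 1)
        (fun _ : Fin (r - e) => p))) := by
  let x : Matrix (Fin r × Fin s) (Fin r × Fin s) F := (jordanBlock F r - 1) ⊗ₖ 1
  let y : Matrix (Fin r × Fin s) (Fin r × Fin s) F := 1 ⊗ₖ (jordanBlock F s - 1)
  have hxy : x * y = y * x := by
    simp only [x, y, ← Matrix.mul_kronecker_mul, mul_one, one_mul]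
  have hpow : ∀ a b, x ^ a * y ^ b
      = ((jordanBlock F r - 1) ^ a) ⊗ₖ ((jordanBlock F s - 1) ^ b) := JordanKronecker.kronecker_pow_pow _ _
  have hx : x ^ r = 0 := by
    have := hpow r 0
    rwa [pow_zero, mul_one, JordanKronecker.jordanBlock_sub_one_pow_self, Matrix.zero_kronecker] at this
  have hy : y ^ s = 0 := by
    have := hpow 0 s
    rwa [pow_zero, one_mul, JordanKronecker.jordanBlock_sub_one_pow_self, Matrix.kronecker_zero] at this
  have hJ : jordanBlock F r ⊗ₖ jordanBlock F s = (1 + x) * (1 + y) := by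
    have h1 : 1 + x = jordanBlock F r ⊗ₖ 1 := by
      rw [← Matrix.one_kronecker_one, ← Matrix.add_kronecker, add_sub_cancel]
    have h2 : 1 + y = 1 ⊗ₖ jordanBlock F s := by
      rw [← Matrix.one_kronecker_one, ← Matrix.kronecker_add, add_sub_cancel]
    rw [h1, h2, ← Matrix.mul_kronecker_mul, mul_one, one_mul]
  let S : Set (Matrix (Fin r × Fin s) (Fin r × Fin s) F) := {x, y}
  let _ : CommRing (Algebra.adjoin F S) :=
    have hcomm : IsMulCommutative (Algebra.adjoin F S) := Algebra.isMulCommutative_adjoin F (by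
    rintro a (rfl | rfl) b (rfl | rfl)
    · rfl
    · exact hxy
    · exact hxy.symm
    · rfl)
    { (inferInstance : Ring (Algebra.adjoin F S)) with
      mul_comm := fun a b => hcomm.is_comm.comm a b }
  let x' : Algebra.adjoin F S := ⟨x, Algebra.subset_adjoin (by simp [S])⟩
  let y' : Algebra.adjoin F S := ⟨y, Algebra.subset_adjoin (by simp [S])⟩
  let φ : Algebra.adjoin F S →ₐ[F] Module.End F (Fin r × Fin s → F) :=
    (Matrix.toLinAlgEquiv' : Matrix (Fin r × Fin s) (Fin r × Fin s) F ≃ₐ[F] _).toAlgHom.comp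
      (Algebra.adjoin F S).val
  have hφ : ∀ (a : Algebra.adjoin F S) v, φ a v = (a : Matrix _ _ F).mulVec v := fun a v => rfl
  obtain ⟨E, hE⟩ := JordanKronecker.exists_equiv_of_commuting φ x' y'
    (Pi.single (⟨r - 1, by omega⟩, ⟨s - 1, by omega⟩) 1) p hp r s hrs hsp e he
    (Subtype.ext hx) (Subtype.ext hy) (fun h => by
      have h1 := congrFun h (⟨0, by omega⟩, ⟨0, by omega⟩)
      rw [hφ, Matrix.mulVec_single_one] at h1
      change (x ^ (r - 1) * y ^ (s - 1)) _ _ = 0 at h1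
      rw [hpow, Matrix.kroneckerMap_apply, JordanKronecker.jordanBlock_sub_one_pow_apply,
        JordanKronecker.jordanBlock_sub_one_pow_apply] at h1
      simp at h1) (by simp)
  refine ⟨E, fun v => ?_⟩
  rw [hJ]
  exact hE v
end

section
/- Let p be a prime, F a field of characteristic p, and r, s integers with 1 ≤ r ≤ p and 1 ≤ s ≤ p. If r + s ≤ p, then the Kronecker product J_r ⊗ J_s is similar over F to the block-diagonal matrix with blocks J_{r+s−2j+1} for 1 ≤ j ≤ min(r,s). If r + s > p, then J_r ⊗ J_s is similar over F to the block-diagonal matrix consisting of r + s − p blocks equal to J_p together with one block J_{2p−r−s−2j+1} for each 1 ≤ j ≤ p − max(r,s). -/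
/-!
Let `X`, `Y` be the two index shifts on functions `Fin r × Fin s → F` extended by zero to `ℕ × ℕ`.
Then `J_r ⊗ J_s` acts as `(1 + X) (1 + Y)`. Multiplying row `i` by `(1 + Y) ^ i` conjugates
this to `1 + X + Y` (`twist_kronecker`); this is the substitution `x ↦ x (1 + y)` in
`F[x, y] / (x ^ r, y ^ s)`. So the Jordan type of the homogeneous nilpotent operator `M = X + Y` is
wanted, and it suffices to produce Jordan chains for `M` of the prescribed lengths, of total length
`r s`, whose last vectors (those in `ker M`) are nonzero and homogeneous of pairwise distinct
degrees (`matSimilar_of_chains`).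

* For `j < min r s` with `r + s - 1 - 2 j ≤ p`, the alternating vector on the antidiagonal
  `i + k = j` spans the degree `j` part of `ker M`. Together with an operator `L` raising the
  degree (`partner`), `M` satisfies `sl₂` relations, so that
  `M L ^ (n + 1) w = (n + 1) (r + s - 2 - 2 j - n) L ^ n w` on the alternating vector `w`. The
  scalars are nonzero in `F` for `n + 1 < r + s - 1 - 2 j`, and rescaling the `L ^ n w` gives
  a chain of length `r + s - 1 - 2 j` (`exists_chain_short`).
* For `j < r + s - p` there is a chain of length `p` ending in degree `j`
  (`exists_chain_long`): `M ^ p = X ^ p + Y ^ p = 0`, while `M ^ (p - 1)` does not kill a suitable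
  indicator function because `p - 1` over `r - 1` is a binomial coefficient prime to `p`.

If `r + s ≤ p`, chains of the first kind for all `j < min r s` suffice. If `r + s > p`, the second
kind is used for `j < r + s - p` and the first kind for `r + s - p ≤ j < min r s`.
-/

open Kronecker

open Finset

section

variable {F : Type*} [Field F]

/-! ### The operator `X + Y` and its `sl₂` partner -/

/-- The operator `X + Y` on functions `ℕ × ℕ → F` (curried), where `X` and `Y` shift the first and
the second index. -/
def shiftSum (F : Type*) [Field F] : (ℕ → ℕ → F) →ₗ[F] (ℕ → ℕ → F) where
  toFun v i k := v (i + 1) k + v i (k + 1)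
  map_add' u v := by ext; simp; ring
  map_smul' c v := by ext; simp; ring

/-- The `sl₂`-partner of `shiftSum`. At `i = 0` the truncated index `i - 1` is harmless because of
the factor `i`; likewise for `k`. -/
def partner (F : Type*) [Field F] (r s : ℕ) : (ℕ → ℕ → F) →ₗ[F] (ℕ → ℕ → F) where
  toFun v i k := (i : F) * (r - i) * v (i - 1) k + (k : F) * (s - k) * v i (k - 1)
  map_add' u v := by ext; simp; ring
  map_smul' c v := by ext; simp; ring

/-- Functions vanishing outside the box `[0, r) × [0, s)`. -/
def boxFun (F : Type*) [Field F] (r s : ℕ) : Submodule F (ℕ → ℕ → F) where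
  carrier := {v | ∀ i k, (r ≤ i ∨ s ≤ k) → v i k = 0}
  add_mem' hu hv i k h := by simp [hu i k h, hv i k h]
  zero_mem' i k h := rfl
  smul_mem' c v hv i k h := by simp [hv i k h]

/-- `v` is homogeneous of degree `e`: it is supported on the antidiagonal `i + k = e`. -/
def Homog (e : ℕ) (v : ℕ → ℕ → F) : Prop := ∀ i k, i + k ≠ e → v i k = 0

lemma shiftSum_mem_box {r s : ℕ} {v : ℕ → ℕ → F} (hv : v ∈ boxFun F r s) :
    shiftSum F v ∈ boxFun F r s := by
  intro i k h
  simp only [shiftSum, LinearMap.coe_mk, AddHom.coe_mk]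
  rw [hv _ _ (by omega), hv _ _ (by omega), add_zero]

/-- The factors `r - i` and `s - k` keep `partner` from leaving the box. -/
lemma partner_mem_box {r s : ℕ} {v : ℕ → ℕ → F} (hv : v ∈ boxFun F r s) :
    partner F r s v ∈ boxFun F r s := by
  intro i k h
  simp only [partner, LinearMap.coe_mk, AddHom.coe_mk]
  have h1 : (i : F) * (r - i) * v (i - 1) k = 0 := by
    by_cases hi : i = r
    · simp [hi]
    · rcases Nat.eq_zero_or_pos i with h0 | h0
      · simp [h0]
      · rw [hv _ _ (by omega), mul_zero]
  have h2 : (k : F) * (s - k) * v i (k - 1) = 0 := by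
    by_cases hi : k = s
    · simp [hi]
    · rcases Nat.eq_zero_or_pos k with h0 | h0
      · simp [h0]
      · rw [hv _ _ (by omega), mul_zero]
  rw [h1, h2, add_zero]

lemma partner_homog {r s e : ℕ} {v : ℕ → ℕ → F} (hv : Homog e v) :
    Homog (e + 1) (partner F r s v) := by
  intro i k h
  simp only [partner, LinearMap.coe_mk, AddHom.coe_mk]
  have h1 : (i : F) * (r - i) * v (i - 1) k = 0 := by
    rcases Nat.eq_zero_or_pos i with h0 | h0
    · simp [h0]
    · rw [hv _ _ (by omega), mul_zero]
  have h2 : (k : F) * (s - k) * v i (k - 1) = 0 := by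
    rcases Nat.eq_zero_or_pos k with h0 | h0
    · simp [h0]
    · rw [hv _ _ (by omega), mul_zero]
  rw [h1, h2, add_zero]

/-- The `sl₂` commutation relation: `[shiftSum, partner]` acts on degree `e` by a scalar. -/
lemma shiftSum_partner {r s e : ℕ} {v : ℕ → ℕ → F} (hv : Homog e v) :
    shiftSum F (partner F r s v) =
      partner F r s (shiftSum F v) + ((r : F) + s - 2 - 2 * e) • v := by
  ext i k
  simp only [shiftSum, partner, LinearMap.coe_mk, AddHom.coe_mk, Pi.add_apply, Pi.smul_apply,
    smul_eq_mul]
  have he : ((r : F) + s - 2 - 2 * e) * v i k = ((r : F) + s - 2 - 2 * (i + k)) * v i k := by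
    by_cases h : i + k = e
    · rw [← h]; push_cast; ring
    · simp [hv i k h]
  rw [he]
  rcases i with _ | i <;> rcases k with _ | k <;> simp <;> ring

lemma partner_pow_homog {r s e : ℕ} {v : ℕ → ℕ → F} (hv : Homog e v) (n : ℕ) :
    Homog (e + n) ((partner F r s ^ n) v) := by
  induction n with
  | zero => simpa using hv
  | succ n ih =>
    rw [pow_succ', Module.End.mul_apply]
    exact partner_homog ih

lemma partner_pow_mem_box {r s : ℕ} {v : ℕ → ℕ → F} (hv : v ∈ boxFun F r s) (n : ℕ) :
    (partner F r s ^ n) v ∈ boxFun F r s := by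
  induction n with
  | zero => simpa using hv
  | succ n ih =>
    rw [pow_succ', Module.End.mul_apply]
    exact partner_mem_box ih

lemma shiftSum_partner_pow {r s e : ℕ} {v : ℕ → ℕ → F} (hv : Homog e v)
    (h0 : shiftSum F v = 0) (n : ℕ) :
    shiftSum F ((partner F r s ^ (n + 1)) v) =
      (((n : F) + 1) * (r + s - 2 - 2 * e - n)) • (partner F r s ^ n) v := by
  induction n with
  | zero =>
    simp [shiftSum_partner hv, h0]
  | succ n ih =>
    rw [pow_succ', Module.End.mul_apply, shiftSum_partner (partner_pow_homog hv (n + 1)), ih,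
      map_smul, ← Module.End.mul_apply, ← pow_succ', ← add_smul]
    congr 1
    push_cast
    ring

/-! ### Jordan chains of `X + Y` -/

/-- The kernel vector of `shiftSum` of degree `j`: alternating signs on an antidiagonal. -/
def altVec (F : Type*) [Field F] (j : ℕ) : ℕ → ℕ → F :=
  fun i k => if i + k = j then (-1) ^ i else 0

lemma altVec_homog (j : ℕ) : Homog j (altVec F j) := by
  intro i k h
  simp [altVec, h]

lemma altVec_ne_zero (j : ℕ) : altVec F j ≠ 0 := by
  intro h
  have := congrFun (congrFun h 0) j
  simp [altVec] at this

lemma shiftSum_altVec (j : ℕ) : shiftSum F (altVec F j) = 0 := by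
  ext i k
  have : i + 1 + k = i + (k + 1) := by omega
  simp only [shiftSum, altVec, LinearMap.coe_mk, AddHom.coe_mk, this]
  split_ifs <;> simp [pow_succ]

lemma altVec_mem_box {r s j : ℕ} (h1 : j < r) (h2 : j < s) : altVec F j ∈ boxFun F r s := by
  intro i k h
  exact altVec_homog j i k (by omega)

/-- `b 0, …, b (d - 1)` is a Jordan chain for `shiftSum` inside the box, and its
kernel vector `b 0` is nonzero and homogeneous of degree `e`. -/
structure ShiftChain (r s d e : ℕ) (b : ℕ → ℕ → ℕ → F) : Prop where
  mem : ∀ k < d, b k ∈ boxFun F r s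
  step : ∀ k, k + 1 < d → shiftSum F (b (k + 1)) = b k
  last : shiftSum F (b 0) = 0
  homog : Homog e (b 0)
  ne_zero : b 0 ≠ 0

/-- A chain of length `r + s - 1 - 2 j`, obtained by rescaling the vectors `partner ^ k (altVec j)`;
the scalars met are products of positive integers smaller than `p`. -/
lemma exists_chain_short (p : ℕ) [CharP F p] {r s j : ℕ} (h1 : j < r) (h2 : j < s)
    (hp : r + s - (2 * j + 1) ≤ p) :
    ∃ b : ℕ → ℕ → ℕ → F, ShiftChain r s (r + s - (2 * j + 1)) j b := by
  set γ : ℕ → F := fun n => ((n : F) + 1) * (r + s - 2 - 2 * j - n) with hγ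
  have hne : ∀ n, n + 1 < r + s - (2 * j + 1) → γ n ≠ 0 := by
    intro n hn
    have hcast : γ n = ((n + 1 : ℕ) : F) * ((r + s - 2 - 2 * j - n : ℕ) : F) := by
      rw [Nat.cast_sub (by omega), Nat.cast_sub (by omega), Nat.cast_sub (by omega)]
      simp [hγ]
    rw [hcast]
    refine mul_ne_zero ?_ ?_
    · rw [Ne, CharP.cast_eq_zero_iff F p]
      exact Nat.not_dvd_of_pos_of_lt (by omega) (by omega)
    · rw [Ne, CharP.cast_eq_zero_iff F p]
      exact Nat.not_dvd_of_pos_of_lt (by omega) (by omega)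
  refine ⟨fun k => (∏ n ∈ range k, γ n)⁻¹ • (partner F r s ^ k) (altVec F j), ?_, ?_, ?_, ?_, ?_⟩
  · intro k _
    exact Submodule.smul_mem _ _ (partner_pow_mem_box (altVec_mem_box h1 h2) k)
  · intro k hk
    rw [map_smul, shiftSum_partner_pow (altVec_homog j) (shiftSum_altVec j), smul_smul,
      prod_range_succ, mul_inv, mul_assoc]
    change (_ * ((γ k)⁻¹ * γ k)) • _ = _
    rw [inv_mul_cancel₀ (hne k hk), mul_one]
  · simp [shiftSum_altVec]
  · simpa using altVec_homog j
  · simpa using altVec_ne_zero j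

lemma shiftSum_pow_apply (n : ℕ) (v : ℕ → ℕ → F) (i k : ℕ) :
    (shiftSum F ^ n) v i k = ∑ t ∈ range (n + 1), (n.choose t : F) * v (i + t) (k + (n - t)) := by
  let X : (ℕ → ℕ → F) →ₗ[F] (ℕ → ℕ → F) :=
    { toFun := fun v i k => v (i + 1) k, map_add' := fun _ _ => rfl, map_smul' := fun _ _ => rfl }
  let Y : (ℕ → ℕ → F) →ₗ[F] (ℕ → ℕ → F) :=
    { toFun := fun v i k => v i (k + 1), map_add' := fun _ _ => rfl, map_smul' := fun _ _ => rfl }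
  have hX : ∀ t v i k, (X ^ t) v i k = v (i + t) k := by
    intro t
    induction t with
    | zero => intros; rfl
    | succ t ih =>
      intro v i k
      rw [pow_succ, Module.End.mul_apply, ih]
      rfl
  have hY : ∀ t v i k, (Y ^ t) v i k = v i (k + t) := by
    intro t
    induction t with
    | zero => intros; rfl
    | succ t ih =>
      intro v i k
      rw [pow_succ, Module.End.mul_apply, ih]
      rfl
  have hXY : shiftSum F = X + Y := rfl
  have hc : Commute X Y := rfl
  rw [hXY, hc.add_pow, LinearMap.sum_apply, Finset.sum_apply, Finset.sum_apply]
  refine sum_congr rfl fun t _ => ?_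
  rw [(Nat.cast_commute (n.choose t) (X ^ t * Y ^ (n - t))).symm.eq, ← nsmul_eq_mul,
    LinearMap.smul_apply, Pi.smul_apply, Pi.smul_apply, Module.End.mul_apply, hX, hY, nsmul_eq_mul]

/-- A chain of length `p` ending in degree `j < r + s - p`: start from the indicator function of
`(r - 1, j + p - r)`. The binomial coefficient `p - 1` over `r - 1` is nonzero in `F`, and
`(X + Y) ^ p = X ^ p + Y ^ p` kills the box. -/
lemma exists_chain_long {p : ℕ} (hp : p.Prime) [CharP F p] {r s j : ℕ} (hr : 1 ≤ r) (hrp : r ≤ p)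
    (hsp : s ≤ p) (hj : j < r + s - p) :
    ∃ b : ℕ → ℕ → ℕ → F, ShiftChain r s p j b := by
  set v : ℕ → ℕ → F := fun i k => if i = r - 1 ∧ k = j + p - r then 1 else 0 with hv
  have hvbox : v ∈ boxFun F r s := by
    intro i k h
    simp only [hv]
    rw [if_neg (by omega)]
  have hpos := hp.pos
  refine ⟨fun k => (shiftSum F ^ (p - 1 - k)) v, ?_, ?_, ?_, ?_, ?_⟩
  · intro k _
    generalize p - 1 - k = n
    induction n with
    | zero => simpa using hvbox
    | succ n ih =>
      rw [pow_succ', Module.End.mul_apply]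
      exact shiftSum_mem_box ih
  · intro k hk
    rw [← Module.End.mul_apply, ← pow_succ']
    congr 2
    omega
  · rw [← Module.End.mul_apply, ← pow_succ']
    ext i k
    rw [shiftSum_pow_apply]
    refine sum_eq_zero fun t ht => ?_
    rw [mem_range] at ht
    by_cases h : 0 < t ∧ t < p
    · have : ((p - 1 - 0 + 1).choose t : F) = 0 := by
        rw [CharP.cast_eq_zero_iff F p, show p - 1 - 0 + 1 = p by omega]
        exact hp.dvd_choose_self h.1.ne' h.2
      rw [this, zero_mul]
    · rw [hvbox _ _ (by omega), mul_zero]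
  · intro i k h
    rw [shiftSum_pow_apply]
    refine sum_eq_zero fun t ht => ?_
    rw [mem_range] at ht
    simp only [hv]
    rw [if_neg (by omega), mul_zero]
  · intro h
    have h0 := congrFun (congrFun h 0) j
    rw [shiftSum_pow_apply, sum_eq_single (r - 1)] at h0
    · simp only [hv] at h0
      rw [if_pos (by omega), mul_one] at h0
      simp only [Pi.zero_apply, CharP.cast_eq_zero_iff F p] at h0
      have h1 : p ∣ (p - 1).factorial := by
        rw [← Nat.choose_mul_factorial_mul_factorial (show r - 1 ≤ p - 1 by omega)]
        exact Dvd.dvd.mul_right (Dvd.dvd.mul_right h0 _) _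
      rw [hp.dvd_factorial] at h1
      omega
    · intro t _ ht
      simp only [hv]
      rw [if_neg (by omega), mul_zero]
    · intro ht
      exact absurd (mem_range.2 (by omega)) ht

/-! ### Conjugating `J_r ⊗ J_s` to `1 + X + Y` -/

/-- Functions on `Fin r × Fin s`, extended by zero. -/
def extendZero (F : Type*) [Field F] (r s : ℕ) : (Fin r × Fin s → F) →ₗ[F] (ℕ → ℕ → F) where
  toFun v i k := if h : i < r ∧ k < s then v (⟨i, h.1⟩, ⟨k, h.2⟩) else 0
  map_add' u v := by ext i k; by_cases h : i < r ∧ k < s <;> simp [h]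
  map_smul' c v := by ext i k; by_cases h : i < r ∧ k < s <;> simp [h]

lemma extendZero_mem_box {r s : ℕ} (v : Fin r × Fin s → F) : extendZero F r s v ∈ boxFun F r s := by
  intro i k h
  simp only [extendZero, LinearMap.coe_mk, AddHom.coe_mk]
  rw [dif_neg (by omega)]

lemma extendZero_fin {r s : ℕ} (v : Fin r × Fin s → F) (i : Fin r) (k : Fin s) :
    extendZero F r s v i k = v (i, k) := by
  simp [extendZero]

lemma extendZero_injective (r s : ℕ) : Function.Injective (extendZero F r s) := by
  intro u v h
  ext ⟨i, k⟩
  rw [← extendZero_fin u, ← extendZero_fin v, h]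

/-- The box is the space of functions on `Fin r × Fin s`. -/
noncomputable def boxEquiv (F : Type*) [Field F] (r s : ℕ) :
    (Fin r × Fin s → F) ≃ₗ[F] boxFun F r s :=
  LinearEquiv.ofBijective ((extendZero F r s).codRestrict (boxFun F r s) extendZero_mem_box) <| by
    refine ⟨fun u v h => extendZero_injective r s (congrArg Subtype.val h), fun w => ?_⟩
    refine ⟨fun x => w.1 x.1 x.2, Subtype.ext ?_⟩
    ext i k
    simp only [extendZero, LinearMap.codRestrict_apply, LinearMap.coe_mk, AddHom.coe_mk]
    split_ifs with h
    · rfl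
    · exact (w.2 i k (by omega)).symm

/-- `1 + shift` on sequences. -/
def unip (F : Type*) [Field F] : (ℕ → F) →ₗ[F] (ℕ → F) where
  toFun f k := f k + f (k + 1)
  map_add' u v := by ext; simp; ring
  map_smul' c v := by ext; simp; ring

lemma unip_apply (f : ℕ → F) (k : ℕ) : unip F f k = f k + f (k + 1) := rfl

/-- The intertwiner coming from the substitution `x ↦ x (1 + y)`, which turns
`(1 + x) (1 + y) - 1` into `x + y`: row `i` is multiplied by `(1 + Y) ^ i`. -/
def twist (F : Type*) [Field F] : (ℕ → ℕ → F) →ₗ[F] (ℕ → ℕ → F) where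
  toFun v i := (unip F ^ i) (v i)
  map_add' u v := by ext; simp
  map_smul' c v := by ext; simp

lemma unip_pow_vanish {s : ℕ} {f : ℕ → F} (hf : ∀ k, s ≤ k → f k = 0) (n : ℕ) :
    ∀ k, s ≤ k → (unip F ^ n) f k = 0 := by
  induction n with
  | zero => simpa using hf
  | succ n ih =>
    intro k hk
    rw [pow_succ', Module.End.mul_apply, unip_apply, ih k hk, ih (k + 1) (by omega), add_zero]

lemma unip_eq_zero {s : ℕ} {f : ℕ → F} (hf : ∀ k, s ≤ k → f k = 0) (h : unip F f = 0) :
    f = 0 := by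
  have key : ∀ n k, s ≤ k + n → f k = 0 := by
    intro n
    induction n with
    | zero => exact fun k hk => hf k hk
    | succ n ih =>
      intro k hk
      have := congrFun h k
      rwa [unip_apply, ih (k + 1) (by omega), add_zero] at this
  ext k
  exact key s k (by omega)

lemma unip_pow_eq_zero {s : ℕ} {f : ℕ → F} (hf : ∀ k, s ≤ k → f k = 0) (n : ℕ)
    (h : (unip F ^ n) f = 0) : f = 0 := by
  induction n with
  | zero => simpa using h
  | succ n ih =>
    rw [pow_succ', Module.End.mul_apply] at h
    exact ih (unip_eq_zero (unip_pow_vanish hf n) h)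

lemma twist_mem_box {r s : ℕ} {v : ℕ → ℕ → F} (hv : v ∈ boxFun F r s) : twist F v ∈ boxFun F r s := by
  intro i k h
  rcases h with h | h
  · have : v i = 0 := by ext k; exact hv i k (Or.inl h)
    simp [twist, this]
  · exact unip_pow_vanish (fun k hk => hv i k (Or.inr hk)) i k h

lemma twist_eq_zero {r s : ℕ} {v : ℕ → ℕ → F} (hv : v ∈ boxFun F r s) (h : twist F v = 0) :
    v = 0 := by
  ext i k
  exact congrFun (unip_pow_eq_zero (fun k hk => hv i k (Or.inr hk)) i (congrFun h i)) k

lemma jordanBlock_mulVec_s8 {m : ℕ} (f : ℕ → F) (hf : ∀ k, m ≤ k → f k = 0) (i : Fin m) :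
    ∑ k : Fin m, jordanBlock F m i k * f k = f i + f (i + 1) := by
  have : ∀ k : Fin m, jordanBlock F m i k * f k =
      (fun n : ℕ => (if n = i then f n else 0) + (if n = i + 1 then f n else 0)) k := by
    intro k
    simp only [jordanBlock, Matrix.of_apply]
    split_ifs <;> first | omega | simp
  rw [sum_congr rfl fun k _ => this k, Fin.sum_univ_eq_sum_range
    (fun n : ℕ => (if n = i then f n else 0) + (if n = i + 1 then f n else 0)) m,
    sum_add_distrib, sum_ite_eq', sum_ite_eq', if_pos (mem_range.2 i.2)]
  split_ifs with h
  · rfl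
  · rw [hf (i + 1) (by simpa using h)]

/-- `J_r ⊗ J_s` acts on functions extended by zero as `(1 + X) (1 + Y)`. -/
lemma extendZero_kronecker {r s : ℕ} (v : Fin r × Fin s → F) (i : ℕ) :
    extendZero F r s ((jordanBlock F r ⊗ₖ jordanBlock F s).mulVec v) i =
      unip F (extendZero F r s v i) + unip F (extendZero F r s v (i + 1)) := by
  ext k
  have hbox := extendZero_mem_box v
  by_cases h : i < r ∧ k < s
  · obtain ⟨⟨i, rfl⟩, ⟨k, rfl⟩⟩ :
        (∃ a : Fin r, (a : ℕ) = i) ∧ ∃ a : Fin s, (a : ℕ) = k := ⟨⟨⟨i, h.1⟩, rfl⟩, ⟨⟨k, h.2⟩, rfl⟩⟩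
    rw [extendZero_fin, Pi.add_apply]
    set w := extendZero F r s v with hw
    have h1 : ∀ a : Fin r, ∑ b : Fin s, jordanBlock F s k b * v (a, b) = unip F (w a) k := by
      intro a
      rw [unip_apply, ← jordanBlock_mulVec_s8 (w a) (fun k hk => hbox _ _ (Or.inr hk))]
      exact sum_congr rfl fun b _ => by rw [hw, extendZero_fin]
    rw [← jordanBlock_mulVec_s8 (fun i => unip F (w i) k)]
    · simp only [← h1]
      simp only [Matrix.mulVec, dotProduct, Matrix.kroneckerMap_apply, Fintype.sum_prod_type,
        mul_sum, mul_assoc]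
    · intro a ha
      rw [unip_apply, hbox _ _ (Or.inl ha), hbox _ _ (Or.inl ha), add_zero]
  · rw [extendZero_mem_box _ i k (by omega), Pi.add_apply, unip_apply, unip_apply,
      hbox _ _ (by omega), hbox _ _ (by omega), hbox _ _ (by omega), hbox _ _ (by omega)]
    simp

lemma twist_kronecker {r s : ℕ} (v : Fin r × Fin s → F) :
    twist F (extendZero F r s ((jordanBlock F r ⊗ₖ jordanBlock F s).mulVec v)) =
      twist F (extendZero F r s v) + shiftSum F (twist F (extendZero F r s v)) := by
  ext i k
  have h1 : ∀ w : ℕ → ℕ → F, ∀ i, twist F w i = (unip F ^ i) (w i) := fun _ _ => rfl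
  rw [h1, extendZero_kronecker, map_add, ← Module.End.mul_apply, ← Module.End.mul_apply,
    ← pow_succ, pow_succ', Module.End.mul_apply, ← pow_succ']
  simp only [Pi.add_apply, unip_apply, shiftSum, LinearMap.coe_mk, AddHom.coe_mk, h1]
  ring

/-! ### From Jordan chains to similarity -/

section Chains

variable {ι : Type} [Fintype ι]

/-- The linear map sending the standard basis vector `(a, k)` to `b a k`. -/
noncomputable def chainMap (d : ι → ℕ) (b : ι → ℕ → ℕ → ℕ → F) :
    (((i : ι) × Fin (d i)) → F) →ₗ[F] (ℕ → ℕ → F) :=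
  Fintype.linearCombination F fun x : (i : ι) × Fin (d i) => b x.1 x.2

lemma chainMap_apply (d : ι → ℕ) (b : ι → ℕ → ℕ → ℕ → F) (c : ((i : ι) × Fin (d i)) → F) :
    chainMap d b c = ∑ a, ∑ k : Fin (d a), c ⟨a, k⟩ • b a k := by
  rw [chainMap, Fintype.linearCombination_apply, Fintype.sum_sigma]

lemma chainMap_jordan [DecidableEq ι] {r s : ℕ} {d e : ι → ℕ} {b : ι → ℕ → ℕ → ℕ → F}
    (hb : ∀ a, ShiftChain r s (d a) (e a) (b a)) (c : ((i : ι) × Fin (d i)) → F) :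
    chainMap d b ((jordanBlockDiag F d).mulVec c) =
      chainMap d b c + shiftSum F (chainMap d b c) := by
  simp only [chainMap_apply, map_sum, map_smul, ← sum_add_distrib]
  refine sum_congr rfl fun a _ => ?_
  set g : ℕ → F := fun k => if h : k < d a then c ⟨a, ⟨k, h⟩⟩ else 0 with hg
  have hg0 : ∀ k, d a ≤ k → g k = 0 := fun k hk => by simp [hg, not_lt.2 hk]
  have hgc : ∀ k : Fin (d a), c ⟨a, k⟩ = g k := fun k => by simp [hg]
  have h1 : ∀ k : Fin (d a), (jordanBlockDiag F d).mulVec c ⟨a, k⟩ = g k + g (k + 1) := by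
    intro k
    rw [← jordanBlock_mulVec_s8 g hg0]
    simp only [Matrix.mulVec, dotProduct, Fintype.sum_sigma]
    rw [sum_eq_single a]
    · exact sum_congr rfl fun k' _ => by
        rw [jordanBlockDiag, Matrix.blockDiagonal'_apply_eq, hgc]
    · intro a' _ ha'
      refine sum_eq_zero fun k' _ => ?_
      rw [jordanBlockDiag, Matrix.blockDiagonal'_apply_ne _ _ _ (Ne.symm ha'), zero_mul]
    · simp
  simp only [h1, hgc]
  rw [Fin.sum_univ_eq_sum_range (fun k => (g k + g (k + 1)) • b a k),
    Fin.sum_univ_eq_sum_range (fun k => g k • b a k + g k • shiftSum F (b a k))]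
  simp only [add_smul, sum_add_distrib]
  congr 1
  have hst := (hb a).step
  generalize d a = n at hg0 hst
  cases n with
  | zero => simp
  | succ n =>
    rw [sum_range_succ, sum_range_succ', hg0 (n + 1) le_rfl, (hb a).last]
    simp only [zero_smul, smul_zero, add_zero]
    exact sum_congr rfl fun k hk => by rw [hst k (by have := mem_range.1 hk; omega)]

lemma shiftSum_pow_chain {r s d e : ℕ} {b : ℕ → ℕ → ℕ → F} (hb : ShiftChain r s d e b) (t k : ℕ)
    (hk : k < d) : (shiftSum F ^ t) (b k) = if t ≤ k then b (k - t) else 0 := by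
  induction t with
  | zero => simp
  | succ t ih =>
    rw [pow_succ', Module.End.mul_apply, ih]
    split_ifs with h1 h2 h2
    · have := hb.step (k - (t + 1)) (by omega)
      rwa [show k - (t + 1) + 1 = k - t by omega] at this
    · rw [show k - t = 0 by omega, hb.last]
    · omega
    · simp

/-- Chains whose kernel vectors have distinct degrees are jointly independent: apply a power
of the operator to isolate the coefficients at the largest surviving height. -/
lemma chainMap_injective {r s : ℕ} {d e : ι → ℕ} {b : ι → ℕ → ℕ → ℕ → F}
    (hb : ∀ a, ShiftChain r s (d a) (e a) (b a)) (he : Function.Injective e) :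
    Function.Injective (chainMap d b) := by
  rw [injective_iff_map_eq_zero]
  intro c hc
  classical
  by_contra hne
  obtain ⟨x, hx⟩ := Function.ne_iff.1 hne
  obtain ⟨y, hy, hmax⟩ := exists_max_image (univ.filter fun x => c x ≠ 0)
    (fun x : (i : ι) × Fin (d i) => (x.2 : ℕ)) ⟨x, by simpa using hx⟩
  obtain ⟨a, t⟩ := y
  have hy' : c ⟨a, t⟩ ≠ 0 := by simpa using hy
  -- A point where the kernel vector of chain `a` does not vanish; by homogeneity every other
  -- kernel vector vanishes there.
  obtain ⟨i, k, hik⟩ : ∃ i k, b a 0 i k ≠ 0 := by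
    by_contra! h
    exact (hb a).ne_zero (by ext i k; exact h i k)
  have hsum : i + k = e a := by
    by_contra h
    exact hik ((hb a).homog i k h)
  have h0 : (shiftSum F ^ (t : ℕ)) (chainMap d b c) i k = 0 := by rw [hc, map_zero]; rfl
  rw [chainMap, Fintype.linearCombination_apply, map_sum, Finset.sum_apply, Finset.sum_apply,
    sum_eq_single ⟨a, t⟩] at h0
  · rw [map_smul, shiftSum_pow_chain (hb a) _ _ t.2] at h0
    simp [hy', hik] at h0
  · rintro ⟨a', k'⟩ - hne'
    by_cases hcz : c ⟨a', k'⟩ = 0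
    · simp [hcz]
    · have hle : (k' : ℕ) ≤ t := hmax ⟨a', k'⟩ (by simpa using hcz)
      rw [map_smul, shiftSum_pow_chain (hb a') _ _ k'.2]
      split_ifs with h
      · have hkt : (k' : ℕ) = t := le_antisymm hle h
        rw [hkt, Nat.sub_self, Pi.smul_apply, Pi.smul_apply, (hb a').homog i k, smul_zero]
        intro heq
        have haa : a' = a := he (heq.symm.trans hsum)
        subst haa
        exact hne' (by rw [Fin.ext hkt])
      · simp
  · simp

/-- Chains with distinct end degrees and of total length `r * s` give the Jordan type of
`J_r ⊗ J_s`. -/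
lemma matSimilar_of_chains [DecidableEq ι] {r s : ℕ} {d e : ι → ℕ}
    (hb : ∀ a, ∃ b : ℕ → ℕ → ℕ → F, ShiftChain r s (d a) (e a) b) (he : Function.Injective e)
    (hd : ∑ a, d a = r * s) :
    MatSimilar F (jordanBlock F r ⊗ₖ jordanBlock F s) (jordanBlockDiag F d) := by
  choose b hb using hb
  have : Module.Finite F (boxFun F r s) := Module.Finite.equiv (boxEquiv F r s)
  have hdim : Module.finrank F (boxFun F r s) = r * s := by
    rw [← (boxEquiv F r s).finrank_eq]
    simp
  have hmem : ∀ c, chainMap d b c ∈ boxFun F r s := by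
    intro c
    rw [chainMap_apply]
    exact Submodule.sum_mem _ fun a _ => Submodule.sum_mem _ fun k _ =>
      Submodule.smul_mem _ _ ((hb a).mem k k.2)
  have hinj : Function.Injective ((chainMap d b).codRestrict (boxFun F r s) hmem) :=
    fun u v h => chainMap_injective hb he (congrArg Subtype.val h)
  have hinj' : Function.Injective ((twist F ∘ₗ extendZero F r s).codRestrict (boxFun F r s)
      fun v => twist_mem_box (extendZero_mem_box v)) := by
    rw [injective_iff_map_eq_zero]
    intro v hv
    have h1 := twist_eq_zero (extendZero_mem_box v) (congrArg Subtype.val hv)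
    exact extendZero_injective r s (by rw [h1, map_zero])
  let E₁ := LinearEquiv.ofInjectiveOfFinrankEq _ hinj (by rw [hdim, ← hd]; simp)
  let E₂ := LinearEquiv.ofInjectiveOfFinrankEq _ hinj' (by rw [hdim]; simp)
  have hE₁ : ∀ c, (E₁ c : ℕ → ℕ → F) = chainMap d b c := fun c => rfl
  have hE₂ : ∀ v, (E₂ v : ℕ → ℕ → F) = twist F (extendZero F r s v) := fun v => rfl
  refine ⟨E₂.trans E₁.symm, fun v => E₁.injective (Subtype.ext ?_)⟩
  have hv : chainMap d b ((E₂.trans E₁.symm) v) = twist F (extendZero F r s v) := by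
    rw [← hE₁, ← hE₂]
    simp
  rw [hE₁, hE₁, chainMap_jordan hb, hv, ← twist_kronecker, ← hE₁, ← hE₂]
  simp

end Chains

/-! ### Counting dimensions -/

lemma sum_odd_down (q n : ℕ) (h : 2 * n ≤ q) :
    ∑ j : Fin n, (q - (2 * (j : ℕ) + 1)) = n * (q - n) := by
  rw [Fin.sum_univ_eq_sum_range (fun j => q - (2 * j + 1))]
  induction n with
  | zero => simp
  | succ n ih =>
    rw [sum_range_succ, ih (by omega)]
    obtain ⟨t, rfl⟩ := Nat.exists_eq_add_of_le h
    rw [show 2 * (n + 1) + t - n = n + 2 + t by omega,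
      show 2 * (n + 1) + t - (2 * n + 1) = t + 1 by omega,
      show 2 * (n + 1) + t - (n + 1) = n + 1 + t by omega]
    ring

end

/-- Symmetrised base case: for `1 ≤ r, s ≤ p`, the decomposition of `J_r ⊗ J_s` in the two
cases `r + s ≤ p` and `r + s > p`. -/
theorem stmt_8 {F : Type*} [Field F] (p : ℕ) (hp : p.Prime) [CharP F p]
    (r s : ℕ) (hr : 1 ≤ r) (hrp : r ≤ p) (hs : 1 ≤ s) (hsp : s ≤ p) :
    (r + s ≤ p →
      MatSimilar F (jordanBlock F r ⊗ₖ jordanBlock F s)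
        (jordanBlockDiag F (fun j : Fin (min r s) => r + s - (2 * (j : ℕ) + 1)))) ∧
    (p < r + s →
      MatSimilar F (jordanBlock F r ⊗ₖ jordanBlock F s)
        (jordanBlockDiag F (Sum.elim
          (fun _ : Fin (r + s - p) => p)
          (fun j : Fin (p - max r s) => 2 * p - r - s - (2 * (j : ℕ) + 1))))) := by
  constructor
  · intro h
    refine matSimilar_of_chains (e := fun j : Fin (min r s) => (j : ℕ)) (fun j => ?_)
      Fin.val_injective ?_
    · have hj := j.2
      exact exists_chain_short p (by omega) (by omega) (by omega)
    · rw [sum_odd_down _ _ (by omega)]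
      rcases le_total r s with h' | h'
      · rw [min_eq_left h', Nat.add_sub_cancel_left]
      · rw [min_eq_right h', Nat.add_sub_cancel, mul_comm]
  · intro h
    -- The chain of length `2p - r - s - 2j - 1` ends in degree `r + s - p + j`.
    refine matSimilar_of_chains
      (e := Sum.elim (fun j : Fin (r + s - p) => (j : ℕ))
        (fun j : Fin (p - max r s) => r + s - p + (j : ℕ))) ?_ ?_ ?_
    · rintro (j | j)
      · exact exists_chain_long hp hr hrp hsp j.2
      · have hj := j.2
        have := exists_chain_short (F := F) p (r := r) (s := s) (j := r + s - p + j)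
          (by omega) (by omega) (by omega)
        rwa [show r + s - (2 * (r + s - p + j) + 1) = 2 * p - r - s - (2 * (j : ℕ) + 1)
          by omega] at this
    · rintro (i | i) (j | j) hij <;> simp only [Sum.elim_inl, Sum.elim_inr] at hij
      · rw [Fin.ext hij]
      · have := i.2
        omega
      · have := j.2
        omega
      · rw [Fin.ext (Nat.add_left_cancel hij)]
    · rw [Fintype.sum_sum_type]
      simp only [Sum.elim_inl, Sum.elim_inr]
      rw [sum_odd_down _ _ (by omega)]
      simp only [sum_const, card_univ, Fintype.card_fin, smul_eq_mul]
      have key : (p - max r s) * (2 * p - r - s - (p - max r s)) = (p - r) * (p - s) := by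
        rcases le_total r s with h' | h'
        · rw [max_eq_right h', mul_comm]
          congr 1
          omega
        · rw [max_eq_left h']
          congr 1
          omega
      rw [key]
      zify [hrp, hsp, h.le]
      ring
end
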